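/- Let λ ∈ (0, 1/3] or λ = 1/2. Let f : ℝ → ℝ be C² with f'(0) ≥ 0, with f'' globally Lipschitz, and with |f''| uniformly bounded on ℝ. Let u₀ : [0,∞) → ℝ be locally absolutely continuous with u₀(0) = 0, u₀'(0) = 0, and ∫_K |u₀'(x)|^{1/λ} dx < ∞ for every compact K ⊂ [0,∞). Then there exists a weak solution u : [0,∞) × [0,∞) → ℝ of equation (E1) with these data (u continuous, u(0,t) = 0, u(x,0) = u₀(x), and ∫₀^∞ ∫₀^∞ { −u_x (φ_t + f'(u) φ_x) + (λ−1) f''(u) (u_x)² φ } dx dt = 0 for all compactly supported C¹ test functions φ on (0,∞)×(0,∞)) which in addition is locally Hölder continuous with exponent 1−λ jointly in (x,t): for every compact set K ⊂ [0,∞) × [0,∞) there is a constant C such that |u(x₁,t₁) − u(x₂,t₂)| ≤ C (|x₁−x₂| + |t₁−t₂|)^{1−λ} for all (x₁,t₁), (x₂,t₂) ∈ K. -/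

import Mathlib

/-!
The solution is built by the method of characteristics in Lagrangian coordinates and continued
conservatively through the times at which `u_x` blows up. Put `p = 1/λ ≥ 2` and
`G(q) = |q|^{p-2} q`. Along a characteristic `X' = f'(u)` the equation makes `1/u_x` grow at the rate
`λ f''(u)`, so one looks for labels `ξ` with `X_ξ = |q|^p`, `U_ξ = c G(q)`, `q = q₀ + c a`,
`a(ξ,t) = λ ∫₀ᵗ f''(U(ξ,s)) ds`; then `u_x = c/q`, and `q` simply changes sign at blow-up. The system
is a Volterra fixed point equation for `a`, solved globally in `exists_lagrangian` by contraction in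
a weighted supremum norm.

The initial label is the energy `x + ∫₀ˣ |u₀'|^p`, for which `|q₀|, |c| ≤ 1`. Only local
integrability of `|u₀'|^p` is assumed, so the original material might be compressed into a bounded
interval at a positive time. To exclude this, every unit cell of labels also receives a piece of
singular material (`q₀ = 0`, `c = 1`), invisible at `t = 0`, whose length at time `t` is
`∫ |a|^p` (`exists_initial`). As `a` is Lipschitz in `ξ`, the original material of a cell cannot be
compressed without the singular material expanding, so that the characteristics always cover the
whole line (`cell_bound`, `X_large`).

Since `X(·,t)` pushes `|q|^p dξ` forward to Lebesgue measure (`map_mu`, `map_nu`), integrals in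
Eulerian coordinates become label integrals, and the integrand of the weak formulation becomes
`-∂ₜ (U_ξ φ(X,t))`, whose integral vanishes (`weak_form`). For `p = 2` the term `f''(u) u_x²` requires
that `q` vanishes only on a null set of times unless `c f''(U) = 0` (`countable_bad`). Hölder
continuity follows from `|U_ξ| ≤ X_ξ^{1-λ}` together with the Lipschitz dependence of `U` and `X` on
time (`U_holder`, `u_holder`).
-/

open Real Set MeasureTheory

/-- Partial derivative in the spatial direction `x` (first coordinate). -/
noncomputable def px (φ : ℝ × ℝ → ℝ) (p : ℝ × ℝ) : ℝ := fderiv ℝ φ p (1, 0)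

/-- Partial derivative in the time direction `t` (second coordinate). -/
noncomputable def pt (φ : ℝ × ℝ → ℝ) (p : ℝ × ℝ) : ℝ := fderiv ℝ φ p (0, 1)

namespace HS

/-! ### The odd power and Hölder's inequality -/

/-- The odd power `q ↦ |q|^{p-2} q`. -/
noncomputable def G (p q : ℝ) : ℝ := |q| ^ (p - 2) * q

lemma hasDerivAt_G {p : ℝ} (hp : 2 ≤ p) (q : ℝ) :
    HasDerivAt (G p) ((p - 1) * |q| ^ (p - 2)) q := by
  rcases eq_or_lt_of_le hp with h | h
  · subst h
    have : G 2 = id := by funext x; simp [G]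
    rw [this]
    have := hasDerivAt_id q
    convert! this using 1
    norm_num
  by_cases hq : q = 0
  · subst hq
    have h1 : (p - 1) * |(0:ℝ)| ^ (p - 2) = 0 := by
      rw [abs_zero, Real.zero_rpow (by linarith)]; simp
    rw [h1, hasDerivAt_iff_tendsto_slope]
    have h2 : Filter.Tendsto (fun x : ℝ => |x| ^ (p - 2)) (nhdsWithin 0 {0}ᶜ) (nhds 0) := by
      have : ContinuousAt (fun x : ℝ => |x| ^ (p - 2)) 0 :=
        (continuous_abs.continuousAt).rpow_const (Or.inr (by linarith))
      have := this.tendsto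
      simp only [abs_zero, Real.zero_rpow (show p - 2 ≠ 0 by linarith)] at this
      exact this.mono_left nhdsWithin_le_nhds
    refine h2.congr' ?_
    filter_upwards [self_mem_nhdsWithin] with x hx
    have hx' : x ≠ 0 := hx
    simp [slope, G]
    field_simp
  · have h1 := (hasDerivAt_abs hq).rpow_const (p := p - 2) (Or.inl (abs_ne_zero.mpr hq))
    have h2 := h1.mul (hasDerivAt_id q)
    refine h2.congr_deriv ?_
    have h3 : |q| ^ (p - 2 - 1) = |q| ^ (p - 2) / |q| := by
      rw [Real.rpow_sub_one (abs_ne_zero.mpr hq)]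
    have h4 : (SignType.sign q : ℝ) * q = |q| := by
      rw [mul_comm]; exact self_mul_sign q
    have h5 : |q| ≠ 0 := abs_ne_zero.mpr hq
    simp only [id]
    rw [h3]
    calc _ = (p - 2) * (|q| ^ (p - 2) / |q|) * ((SignType.sign q : ℝ) * q) + |q| ^ (p - 2) := by ring
      _ = _ := by rw [h4]; field_simp; ring

lemma continuous_G {p : ℝ} (hp : 2 ≤ p) : Continuous (G p) :=
  continuous_iff_continuousAt.mpr fun q => (hasDerivAt_G hp q).continuousAt

lemma abs_G {p : ℝ} (hp : 2 ≤ p) (q : ℝ) : |G p q| = |q| ^ (p - 1) := by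
  rw [G, abs_mul, abs_of_nonneg (Real.rpow_nonneg (abs_nonneg q) _)]
  by_cases hq : q = 0
  · subst hq; simp [Real.zero_rpow (show p - 1 ≠ 0 by linarith)]
  · rw [← Real.rpow_add_one (abs_ne_zero.mpr hq)]; ring_nf

lemma abs_G_le {p : ℝ} (hp : 2 ≤ p) {q R : ℝ} (hq : |q| ≤ R) : |G p q| ≤ R ^ (p - 1) := by
  rw [abs_G hp]; exact Real.rpow_le_rpow (abs_nonneg q) hq (by linarith)

lemma hasDerivAt_absPow {p : ℝ} (hp : 2 ≤ p) (q : ℝ) :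
    HasDerivAt (fun x : ℝ => |x| ^ p) (p * G p q) q := by
  have := hasDerivAt_abs_rpow q (p := p) (by linarith)
  rw [G]; convert this using 1; ring

lemma continuous_absPow {p : ℝ} (hp : 2 ≤ p) : Continuous (fun x : ℝ => |x| ^ p) :=
  continuous_abs.rpow_const fun _ => Or.inr (by linarith)

lemma G_mul_self {p : ℝ} (hp : 2 ≤ p) (q : ℝ) : G p q * q = |q| ^ p := by
  by_cases hq : q = 0
  · subst hq; simp [Real.zero_rpow (show p ≠ 0 by linarith)]
  · rw [G, mul_assoc, ← abs_mul_abs_self q, ← mul_assoc, ← Real.rpow_add_one (abs_ne_zero.mpr hq),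
      ← Real.rpow_add_one (abs_ne_zero.mpr hq)]; ring_nf

lemma G_lip {p : ℝ} (hp : 2 ≤ p) {q r R : ℝ} (hq : |q| ≤ R) (hr : |r| ≤ R) :
    |G p q - G p r| ≤ (p - 1) * R ^ (p - 2) * |q - r| := by
  have := (convex_Icc (-R) R).norm_image_sub_le_of_norm_hasDerivWithin_le (f := G p)
    (f' := fun q => (p - 1) * |q| ^ (p - 2)) (C := (p - 1) * R ^ (p - 2)) (x := r) (y := q)
    (fun x _ => (hasDerivAt_G hp x).hasDerivWithinAt) ?_ (abs_le.mp hr) (abs_le.mp hq)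
  · simpa [Real.norm_eq_abs] using this
  · intro x hx
    have hx' : |x| ≤ R := abs_le.mpr hx
    rw [Real.norm_eq_abs, abs_of_nonneg (mul_nonneg (by linarith) (Real.rpow_nonneg (abs_nonneg x) _))]
    exact mul_le_mul_of_nonneg_left (Real.rpow_le_rpow (abs_nonneg x) hx' (by linarith))
      (by linarith)

/-- Hölder's inequality against the constant function `1` on an interval. -/
lemma holder_interval {r : ℝ} (hr : 1 < r) {a b : ℝ} (hab : a ≤ b) {g : ℝ → ℝ}
    (hg : AEStronglyMeasurable g (volume.restrict (Ioc a b)))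
    (hgr : IntegrableOn (fun x => |g x| ^ r) (Ioc a b)) :
    ∫ x in a..b, |g x| ≤ (∫ x in a..b, |g x| ^ r) ^ (1 / r) * (b - a) ^ (1 - 1 / r) := by
  have hconj : r.HolderConjugate (r / (r - 1)) := Real.HolderConjugate.conjExponent hr
  rw [intervalIntegral.integral_of_le hab, intervalIntegral.integral_of_le hab]
  have h1 : MemLp (fun x => |g x|) (ENNReal.ofReal r) (volume.restrict (Ioc a b)) := by
    have h0 : ENNReal.ofReal r ≠ 0 := by simp; linarith
    refine (integrable_norm_rpow_iff hg.norm h0 (by simp)).mp ?_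
    rw [ENNReal.toReal_ofReal (by linarith)]
    simpa using! hgr
  have h2 : MemLp (fun _ : ℝ => (1:ℝ)) (ENNReal.ofReal (r / (r - 1))) (volume.restrict (Ioc a b)) :=
    memLp_const 1
  have := integral_mul_le_Lp_mul_Lq_of_nonneg hconj (μ := volume.restrict (Ioc a b))
    (f := fun x => |g x|) (g := fun _ => (1:ℝ)) (by filter_upwards with x using abs_nonneg _)
    (by filter_upwards with x using zero_le_one) h1 h2
  simp only [mul_one, Real.one_rpow, integral_const, MeasurableSet.univ, measureReal_restrict_apply,
    univ_inter, Real.volume_real_Ioc_of_le hab, smul_eq_mul] at this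
  refine this.trans (le_of_eq ?_)
  congr 2
  have : r - 1 ≠ 0 := by linarith
  have : r ≠ 0 := by linarith
  field_simp

/-! ### The Lagrangian fixed point -/

/-- Truncation of `y` to `[-m, m]`. -/
noncomputable def clip (m y : ℝ) : ℝ := max (-m) (min m y)

lemma clip_abs_le {m : ℝ} (hm : 0 ≤ m) (y : ℝ) : |clip m y| ≤ m := by
  rw [abs_le, clip]; exact ⟨le_max_left _ _, max_le (by linarith) (min_le_left _ _)⟩

lemma clip_eq {m y : ℝ} (h : |y| ≤ m) : clip m y = y := by
  rw [abs_le] at h; rw [clip, min_eq_right h.2, max_eq_right h.1]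

lemma clip_lip (m y z : ℝ) : |clip m y - clip m z| ≤ |y - z| := by
  unfold clip
  refine (abs_max_sub_max_le_max _ _ _ _).trans ?_
  simp only [sub_self, abs_zero]
  refine max_le (abs_nonneg _) ((abs_min_sub_min_le_max _ _ _ _).trans ?_)
  simp

/-- The Lagrangian unknown `U(ξ,s) = ∫₀^ξ c G(q₀ + c A(·,s))` attached to a function `A`. -/
noncomputable def Uop (p : ℝ) (q0 c : ℝ → ℝ) (A : ℝ × ℝ → ℝ) (ξ s : ℝ) : ℝ :=
  ∫ η in (0:ℝ)..ξ, c η * G p (q0 η + c η * A (η, s))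

section
variable {p : ℝ} (hp : 2 ≤ p) {q0 c : ℝ → ℝ} (hq0m : Measurable q0) (hcm : Measurable c)
  (hq0 : ∀ ξ, |q0 ξ| ≤ 1) (hc : ∀ ξ, |c ξ| ≤ 1)
include hp hq0m hcm

lemma meas_integrand {A : ℝ × ℝ → ℝ} (hA : Continuous A) :
    Measurable (fun z : ℝ × ℝ => c z.1 * G p (q0 z.1 + c z.1 * A z)) := by
  have := (continuous_G hp).measurable
  fun_prop

lemma meas_integrand_slice {A : ℝ × ℝ → ℝ} (hA : Continuous A) (s : ℝ) :
    Measurable (fun η : ℝ => c η * G p (q0 η + c η * A (η, s))) :=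
  (meas_integrand hp hq0m hcm hA).comp (measurable_id.prodMk measurable_const)

include hq0 hc

omit hp hq0m hcm in
lemma abs_q_le {m y ξ : ℝ} (hm : |y| ≤ m) : |q0 ξ + c ξ * y| ≤ 1 + m := by
  refine (abs_add_le _ _).trans (add_le_add (hq0 ξ) ?_)
  rw [abs_mul]
  calc |c ξ| * |y| ≤ 1 * m := mul_le_mul (hc ξ) hm (abs_nonneg _) zero_le_one
    _ = m := one_mul m

omit hq0m hcm in
lemma integrand_le {m y ξ : ℝ} (hm : |y| ≤ m) :
    |c ξ * G p (q0 ξ + c ξ * y)| ≤ (1 + m) ^ (p - 1) := by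
  rw [abs_mul]
  have h1 := abs_G_le hp (abs_q_le hq0 hc hm (ξ := ξ))
  calc _ ≤ 1 * (1 + m) ^ (p - 1) := mul_le_mul (hc ξ) h1 (abs_nonneg _) zero_le_one
    _ = _ := one_mul _

lemma integrand_ii {A : ℝ × ℝ → ℝ} (hA : Continuous A) {m : ℝ → ℝ}
    (hAm : ∀ z : ℝ × ℝ, |A z| ≤ m z.2) (s a b : ℝ) :
    IntervalIntegrable (fun η : ℝ => c η * G p (q0 η + c η * A (η, s))) volume a b := by
  refine (intervalIntegrable_const (c := (1 + m s) ^ (p - 1))).mono_fun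
    (meas_integrand_slice hp hq0m hcm hA s).aestronglyMeasurable ?_
  filter_upwards with η
  exact (integrand_le hp hq0 hc (hAm (η, s))).trans (le_abs_self _)

lemma continuous_Uop {A : ℝ × ℝ → ℝ} (hA : Continuous A) {m : ℝ → ℝ} (hmc : Continuous m)
    (hAm : ∀ z : ℝ × ℝ, |A z| ≤ m z.2) :
    Continuous (fun z : ℝ × ℝ => Uop p q0 c A z.1 z.2) := by
  suffices h : Continuous (fun z : ℝ × ℝ => Uop p q0 c A z.2 z.1) from h.comp continuous_swap
  rw [continuous_iff_continuousAt]
  rintro ⟨s, ξ⟩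
  refine intervalIntegral.continuousAt_parametric_primitive_of_dominated
    (F := fun s η => c η * G p (q0 η + c η * A (η, s))) (fun _ => (1 + (m s + 1)) ^ (p - 1))
    (min ξ 0 - 1) (max ξ 0 + 1) (fun x => (meas_integrand_slice hp hq0m hcm hA x).aestronglyMeasurable)
    ?_ intervalIntegrable_const ?_ ⟨?_, ?_⟩ ⟨?_, ?_⟩ (by simp)
  · have : ∀ᶠ x in nhds s, m x < m s + 1 := hmc.continuousAt.eventually_lt_const (by linarith)
    filter_upwards [this] with x hx
    filter_upwards with η
    exact integrand_le hp hq0 hc ((hAm (η, x)).trans hx.le)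
  · filter_upwards with η
    have := continuous_G hp
    fun_prop
  all_goals first
    | linarith [min_le_left ξ 0, min_le_right ξ 0, le_max_left ξ 0, le_max_right ξ 0]

omit hq0m hcm in
lemma Uop_lip {A : ℝ × ℝ → ℝ} {m : ℝ → ℝ}
    (hAm : ∀ z : ℝ × ℝ, |A z| ≤ m z.2) (s ξ η : ℝ)
    (hi : ∀ a b, IntervalIntegrable (fun η : ℝ => c η * G p (q0 η + c η * A (η, s))) volume a b) :
    |Uop p q0 c A ξ s - Uop p q0 c A η s| ≤ (1 + m s) ^ (p - 1) * |ξ - η| := by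
  unfold Uop
  rw [intervalIntegral.integral_interval_sub_left (hi _ _) (hi _ _)]
  exact intervalIntegral.norm_integral_le_of_norm_le_const
    (f := fun η : ℝ => c η * G p (q0 η + c η * A (η, s))) (C := (1 + m s) ^ (p - 1))
    (fun x _ => integrand_le hp hq0 hc (hAm (x, s)))

end

set_option maxHeartbeats 1000000 in
/-- The Lagrangian system, written as a fixed point equation for
`a(ξ,t) = λ ∫₀ᵗ f''(U(ξ,s)) ds`, has a global solution: the Volterra operator is a contraction
for a weighted supremum norm. Negative times carry the frozen value `a = 0`. -/
theorem exists_lagrangian {p lam M L : ℝ} (hp : 2 ≤ p) (hlam : 0 < lam) (hM : 0 ≤ M) (hL : 0 ≤ L)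
    {f2 : ℝ → ℝ} (hf2 : ∀ x y, |f2 x - f2 y| ≤ L * |x - y|) (hf2b : ∀ x, |f2 x| ≤ M)
    (hf2c : Continuous f2)
    {q0 c : ℝ → ℝ} (hq0m : Measurable q0) (hcm : Measurable c)
    (hq0 : ∀ ξ, |q0 ξ| ≤ 1) (hc : ∀ ξ, |c ξ| ≤ 1) (hneg : ∀ ξ < 0, c ξ = 0) :
    ∃ a : ℝ × ℝ → ℝ, Continuous a ∧ (∀ z, |a z| ≤ lam * M * max z.2 0) ∧
      ∀ ξ t, a (ξ, t) = lam * ∫ s in (0:ℝ)..(max t 0), f2 (Uop p q0 c a ξ s) := by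
  classical
  set m : ℝ → ℝ := fun s => lam * M * max s 0 with hm
  have hm0 : ∀ s, 0 ≤ m s := fun s => by positivity
  have hmc : Continuous m := by fun_prop
  set k : ℝ → ℝ := fun t => (p - 1) * (1 + m t) ^ (p - 2) with hk
  have hkc : Continuous k := by
    refine continuous_const.mul (Continuous.rpow_const (by fun_prop) fun x => Or.inl ?_)
    have := hm0 x; positivity
  have hk1 : ∀ t, 1 ≤ k t := fun t => by
    have h1 : 1 ≤ (1 + m t) ^ (p - 2) := Real.one_le_rpow (by linarith [hm0 t]) (by linarith)
    nlinarith
  have hkmono : ∀ s t, s ≤ t → k s ≤ k t := fun s t hst => by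
    refine mul_le_mul_of_nonneg_left (Real.rpow_le_rpow (by linarith [hm0 s]) ?_ (by linarith))
      (by linarith)
    have : m s ≤ m t := mul_le_mul_of_nonneg_left (max_le_max_right 0 hst) (by positivity)
    linarith
  -- `κ` exceeds twice the Lipschitz constant of the operator up to time `t`, which makes the
  -- operator a contraction in the norm weighted by `1 / w`
  set κ : ℝ → ℝ := fun t => 2 * lam * (L + 1) * k t with hκ
  have hκpos : ∀ t, 0 < κ t := fun t => by have := hk1 t; positivity
  set w : ℝ × ℝ → ℝ := fun z => Real.exp (max z.1 0 + κ z.2 * max z.2 0) with hw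
  have hwc : Continuous w := by fun_prop
  have hwpos : ∀ z, 0 < w z := fun z => Real.exp_pos _
  -- the truncated, unweighted field attached to a point of the Banach space
  set Af : BoundedContinuousFunction (ℝ × ℝ) ℝ → ℝ × ℝ → ℝ :=
    fun b z => clip (m z.2) (w z * b z) with hAf
  have hAc : ∀ b, Continuous (Af b) := fun b => by
    simp only [hAf, clip]; fun_prop
  have hAm : ∀ b z, |Af b z| ≤ m z.2 := fun b z => clip_abs_le (hm0 _) _
  have hAd : ∀ b b' z, |Af b z - Af b' z| ≤ w z * dist b b' := fun b b' z => by
    refine (clip_lip _ _ _).trans ?_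
    rw [← mul_sub, abs_mul, abs_of_pos (hwpos z)]
    have hd : |b z - b' z| ≤ dist b b' := by
      rw [← Real.dist_eq]; exact BoundedContinuousFunction.dist_coe_le_dist z
    exact mul_le_mul_of_nonneg_left hd (hwpos z).le
  set Φ : BoundedContinuousFunction (ℝ × ℝ) ℝ → ℝ × ℝ → ℝ := fun b z =>
    lam * ∫ s in (0:ℝ)..(max z.2 0), f2 (Uop p q0 c (Af b) (max z.1 0) s) with hΦ
  have hUc : ∀ b, Continuous (fun z : ℝ × ℝ => Uop p q0 c (Af b) z.1 z.2) := fun b =>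
    continuous_Uop hp hq0m hcm hq0 hc (hAc b) hmc (hAm b)
  have hΦc : ∀ b, Continuous (Φ b) := fun b => by
    have hu : Continuous fun q : (ℝ × ℝ) × ℝ => Uop p q0 c (Af b) (max q.1.1 0) q.2 :=
      (hUc b).comp (by fun_prop : Continuous fun q : (ℝ × ℝ) × ℝ => ((max q.1.1 0, q.2) : ℝ × ℝ))
    have hu2 : Continuous (Function.uncurry fun (z : ℝ × ℝ) (s : ℝ) =>
      f2 (Uop p q0 c (Af b) (max z.1 0) s)) := hf2c.comp hu
    exact continuous_const.mul
      (intervalIntegral.continuous_parametric_intervalIntegral_of_continuous hu2 (by fun_prop))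
  have hΦb : ∀ b z, |Φ b z| ≤ m z.2 := fun b z => by
    simp only [hΦ, hm]
    rw [abs_mul, abs_of_pos hlam, mul_assoc]
    refine mul_le_mul_of_nonneg_left ?_ hlam.le
    have := intervalIntegral.norm_integral_le_of_norm_le_const (a := 0) (b := max z.2 0) (C := M)
      (f := fun s => f2 (Uop p q0 c (Af b) (max z.1 0) s)) (fun x _ => hf2b _)
    rwa [sub_zero, abs_of_nonneg (le_max_right z.2 0)] at this
  set C0 : ℝ := lam * M / (2 * lam * (L + 1)) with hC0
  have hΨb : ∀ b z, ‖Φ b z / w z‖ ≤ C0 := fun b z => by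
    rw [Real.norm_eq_abs, abs_div, abs_of_pos (hwpos z), div_le_iff₀ (hwpos z)]
    refine (hΦb b z).trans ?_
    have h1 : κ z.2 * max z.2 0 ≤ w z := by
      have h2 := Real.add_one_le_exp (max z.1 0 + κ z.2 * max z.2 0)
      have := le_max_right z.1 0
      simp only [hw]; linarith
    have h3 : 2 * lam * (L + 1) * max z.2 0 ≤ κ z.2 * max z.2 0 := by
      refine mul_le_mul_of_nonneg_right ?_ (le_max_right _ _)
      simp only [hκ]
      have := hk1 z.2
      have h4 : 0 < 2 * lam * (L + 1) := by positivity
      nlinarith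
    have h5 : 0 < 2 * lam * (L + 1) := by positivity
    rw [hC0, div_mul_eq_mul_div, le_div_iff₀ h5]
    calc m z.2 * (2 * lam * (L + 1)) = lam * M * (2 * lam * (L + 1) * max z.2 0) := by
          simp only [hm]; ring
      _ ≤ lam * M * w z := mul_le_mul_of_nonneg_left (h3.trans h1) (by positivity)
  set Ψ : BoundedContinuousFunction (ℝ × ℝ) ℝ → BoundedContinuousFunction (ℝ × ℝ) ℝ := fun b =>
    BoundedContinuousFunction.ofNormedAddCommGroup (fun z => Φ b z / w z)
      ((hΦc b).div hwc fun z => (hwpos z).ne') C0 (hΨb b) with hΨ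
  have hUd : ∀ b b' ξ s, 0 ≤ ξ → 0 ≤ s →
      |Uop p q0 c (Af b) ξ s - Uop p q0 c (Af b') ξ s| ≤
        k s * dist b b' * Real.exp (κ s * s) * Real.exp ξ := by
    intro b b' ξ s hξ hs
    unfold Uop
    rw [← intervalIntegral.integral_sub (integrand_ii hp hq0m hcm hq0 hc (hAc b) (hAm b) s _ _)
      (integrand_ii hp hq0m hcm hq0 hc (hAc b') (hAm b') s _ _)]
    have hb : ∀ η ∈ Ioc 0 ξ, ‖c η * G p (q0 η + c η * Af b (η, s)) -
        c η * G p (q0 η + c η * Af b' (η, s))‖ ≤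
        k s * dist b b' * Real.exp (κ s * s) * Real.exp η := by
      intro η hη
      rw [← mul_sub, Real.norm_eq_abs, abs_mul]
      have h1 := G_lip hp (abs_q_le hq0 hc (hAm b (η, s)) (ξ := η))
        (abs_q_le hq0 hc (hAm b' (η, s)) (ξ := η))
      have h2 : |q0 η + c η * Af b (η, s) - (q0 η + c η * Af b' (η, s))| ≤
          w (η, s) * dist b b' := by
        rw [add_sub_add_left_eq_sub, ← mul_sub, abs_mul]
        calc _ ≤ 1 * (w (η, s) * dist b b') :=
              mul_le_mul (hc η) (hAd b b' _) (abs_nonneg _) zero_le_one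
          _ = _ := one_mul _
      have hws : w (η, s) = Real.exp η * Real.exp (κ s * s) := by
        simp only [hw]
        rw [max_eq_left hη.1.le, max_eq_left hs, Real.exp_add]
      calc _ ≤ 1 * (k s * (w (η, s) * dist b b')) :=
            mul_le_mul (hc η) (h1.trans (mul_le_mul_of_nonneg_left h2 (by linarith [hk1 s])))
              (abs_nonneg _) zero_le_one
        _ = _ := by rw [hws]; ring
    have h3 := intervalIntegral.norm_integral_le_of_norm_le hξ
      (Filter.Eventually.of_forall hb) (μ := volume)
      ((Continuous.intervalIntegrable (by fun_prop) _ _))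
    refine h3.trans ?_
    rw [intervalIntegral.integral_const_mul, integral_exp]
    refine mul_le_mul_of_nonneg_left (by linarith [Real.exp_pos 0]) ?_
    have := hk1 s; positivity
  have hΦd : ∀ b b' z, |Φ b z - Φ b' z| ≤ (1 / 2) * dist b b' * w z := by
    intro b b' z
    obtain ⟨ξ, t⟩ := z
    set τ := max t 0 with hτ
    have hτ0 : 0 ≤ τ := le_max_right _ _
    have hkt : ∀ s, s ≤ τ → k s ≤ k t := by
      intro s hs
      rcases le_total 0 t with h | h
      · rw [hτ, max_eq_left h] at hs; exact hkmono _ _ hs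
      · rw [hτ, max_eq_right h] at hs
        refine le_of_eq_of_le ?_ le_rfl
        simp only [hk, hm, max_eq_right hs, max_eq_right h]
    simp only [hΦ]
    have hii : ∀ b, IntervalIntegrable (fun s => f2 (Uop p q0 c (Af b) (max ξ 0) s)) volume 0 τ :=
      fun b => by
        have hu : Continuous fun s : ℝ => Uop p q0 c (Af b) (max ξ 0) s :=
          (hUc b).comp (by fun_prop : Continuous fun s : ℝ => ((max ξ 0, s) : ℝ × ℝ))
        exact (hf2c.comp hu).intervalIntegrable _ _
    rw [← mul_sub, ← intervalIntegral.integral_sub (hii b) (hii b'), abs_mul, abs_of_pos hlam]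
    have hb : ∀ s ∈ Ioc 0 τ, ‖f2 (Uop p q0 c (Af b) (max ξ 0) s) -
        f2 (Uop p q0 c (Af b') (max ξ 0) s)‖ ≤
        ((L + 1) * k t * dist b b' * Real.exp (max ξ 0)) * Real.exp (κ t * s) := by
      intro s hs
      refine (hf2 _ _).trans ?_
      have h1 := hUd b b' (max ξ 0) s (le_max_right _ _) hs.1.le
      have h2 : Real.exp (κ s * s) ≤ Real.exp (κ t * s) := by
        refine Real.exp_le_exp.mpr (mul_le_mul_of_nonneg_right ?_ hs.1.le)
        exact mul_le_mul_of_nonneg_left (hkt s hs.2) (by positivity)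
      have h3 : k s * dist b b' * Real.exp (κ s * s) * Real.exp (max ξ 0) ≤
          k t * dist b b' * Real.exp (κ t * s) * Real.exp (max ξ 0) := by
        have := hkt s hs.2
        have := hk1 s
        have := hk1 t
        gcongr
      calc L * _ ≤ (L + 1) * (k t * dist b b' * Real.exp (κ t * s) * Real.exp (max ξ 0)) :=
            mul_le_mul (by linarith) (h1.trans h3) (abs_nonneg _) (by linarith)
        _ = _ := by ring
    have h3 := intervalIntegral.norm_integral_le_of_norm_le hτ0
      (Filter.Eventually.of_forall hb) (μ := volume)
      ((Continuous.intervalIntegrable (by fun_prop) _ _))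
    rw [intervalIntegral.integral_const_mul] at h3
    have h4 : ∫ s in (0:ℝ)..τ, Real.exp (κ t * s) = (Real.exp (κ t * τ) - 1) / κ t := by
      rw [intervalIntegral.integral_comp_mul_left (fun x => Real.exp x) (hκpos t).ne', integral_exp]
      simp; field_simp
    rw [h4] at h3
    refine (mul_le_mul_of_nonneg_left h3 hlam.le).trans ?_
    have hw' : w (ξ, t) = Real.exp (max ξ 0) * Real.exp (κ t * τ) := by
      simp only [hw, Real.exp_add, hτ]
    have hkt0 : k t ≠ 0 := by linarith [hk1 t]
    have hL1 : L + 1 ≠ 0 := by linarith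
    rw [hw']
    have h5 : lam * ((L + 1) * k t * dist b b' * Real.exp (max ξ 0) *
        ((Real.exp (κ t * τ) - 1) / κ t)) =
        (1 / 2) * dist b b' * (Real.exp (max ξ 0) * (Real.exp (κ t * τ) - 1)) := by
      simp only [hκ]; field_simp
    rw [h5]
    have : 0 ≤ dist b b' := dist_nonneg
    gcongr
    linarith
  have hcontr : ContractingWith (1 / 2) Ψ := by
    refine ⟨by rw [← NNReal.coe_lt_coe]; norm_num, LipschitzWith.of_dist_le_mul fun b b' => ?_⟩
    rw [BoundedContinuousFunction.dist_le (by positivity)]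
    intro z
    have hz : Ψ b z = Φ b z / w z := rfl
    have hz' : Ψ b' z = Φ b' z / w z := rfl
    rw [hz, hz', Real.dist_eq, ← sub_div, abs_div, abs_of_pos (hwpos z), div_le_iff₀ (hwpos z)]
    simpa using hΦd b b' z
  obtain ⟨b, hbfix⟩ : ∃ b, Ψ b = b := ⟨_, hcontr.fixedPoint_isFixedPt⟩
  have hfix : ∀ z, w z * b z = Φ b z := fun z => by
    have : Φ b z / w z = b z := by
      have : Ψ b z = b z := by rw [hbfix]
      exact this
    rw [← this]; field_simp [(hwpos z).ne']
  have hAΦ : Af b = Φ b := by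
    funext z
    simp only [hAf]
    rw [hfix z, clip_eq (hΦb b z)]
  refine ⟨Φ b, hΦc b, hΦb b, fun ξ t => ?_⟩
  have hUmax : ∀ s, Uop p q0 c (Af b) (max ξ 0) s = Uop p q0 c (Af b) ξ s := fun s => by
    rcases le_total 0 ξ with h | h
    · rw [max_eq_left h]
    · rw [max_eq_right h]
      unfold Uop
      rw [intervalIntegral.integral_same, intervalIntegral.integral_symm,
        intervalIntegral.integral_of_le h, setIntegral_congr_set Ioo_ae_eq_Ioc.symm,
        setIntegral_eq_zero_of_forall_eq_zero, neg_zero]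
      intro x hx
      rw [hneg x hx.2, zero_mul]
  conv_lhs => simp only [hΦ]
  simp only [hUmax]
  rw [← hAΦ]

/-! ### Lagrangian description of the initial datum -/

/-- Inverse `X` of the energy function `x ↦ x + ∫₀ˣ |g₀|^p`. In the energy coordinate both `X` and
`u₀ ∘ X` are Lipschitz, and the increments of `u₀ ∘ X` are controlled by Hölder's inequality. -/
lemma exists_energy_coord {p lam : ℝ} (hp : 2 ≤ p) (hlp : lam = 1 / p) {u₀ g₀ : ℝ → ℝ}
    (hg₀int : ∀ b : ℝ, 0 < b → IntervalIntegrable g₀ volume 0 b)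
    (hu₀AC : ∀ x : ℝ, 0 ≤ x → u₀ x = ∫ y in (0:ℝ)..x, g₀ y)
    (hu₀W : ∀ b : ℝ, 0 < b → IntegrableOn (fun x => |g₀ x| ^ p) (Icc 0 b)) :
    ∃ X : ℝ → ℝ, X 0 = 0 ∧ (∀ e, 0 ≤ e → 0 ≤ X e) ∧
      (∀ e₁ e₂, 0 ≤ e₁ → e₁ ≤ e₂ → X e₁ ≤ X e₂ ∧ X e₂ - X e₁ ≤ e₂ - e₁ ∧
        |u₀ (X e₂) - u₀ (X e₁)| ≤ (e₂ - e₁) ^ lam * (X e₂ - X e₁) ^ (1 - lam)) ∧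
      ∀ x, 0 ≤ x → ∃ e, 0 ≤ e ∧ X e = x := by
  have hgi : ∀ a b, 0 ≤ a → 0 ≤ b → IntervalIntegrable g₀ volume a b := by
    have h : ∀ b, 0 ≤ b → IntervalIntegrable g₀ volume 0 b := fun b hb => by
      rcases hb.eq_or_lt with h | h
      · subst h; exact IntervalIntegrable.refl
      · exact hg₀int b h
    exact fun a b ha hb => (h a ha).symm.trans (h b hb)
  have hpi : ∀ a b, 0 ≤ a → 0 ≤ b → IntervalIntegrable (fun x => |g₀ x| ^ p) volume a b := by
    have h : ∀ b, 0 ≤ b → IntervalIntegrable (fun x => |g₀ x| ^ p) volume 0 b := fun b hb => by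
      rcases hb.eq_or_lt with h | h
      · subst h; exact IntervalIntegrable.refl
      · rw [intervalIntegrable_iff_integrableOn_Ioc_of_le hb]
        exact (hu₀W b h).mono_set Ioc_subset_Icc_self
    exact fun a b ha hb => (h a ha).symm.trans (h b hb)
  set E : ℝ → ℝ := fun x => x + ∫ y in (0:ℝ)..x, |g₀ y| ^ p with hE
  have hEsub : ∀ a b, 0 ≤ a → 0 ≤ b → E b - E a = (b - a) + ∫ y in a..b, |g₀ y| ^ p := by
    intro a b ha hb
    have := intervalIntegral.integral_interval_sub_left (hpi 0 b le_rfl hb) (hpi 0 a le_rfl ha)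
    simp only [hE]; rw [← this]; ring
  have hnn : ∀ a b, a ≤ b → 0 ≤ ∫ y in a..b, |g₀ y| ^ p := fun a b hab =>
    intervalIntegral.integral_nonneg hab fun x _ => Real.rpow_nonneg (abs_nonneg _) _
  have hE0 : E 0 = 0 := by simp [hE]
  have hsurj : ∀ e, 0 ≤ e → ∃ x, 0 ≤ x ∧ E x = e := by
    intro e he
    have hcont : ContinuousOn E (Icc 0 e) := by
      have h := intervalIntegral.continuousOn_primitive_interval (μ := volume)
        (f := fun y => |g₀ y| ^ p) (a := 0) (b := e) (by
          rw [uIcc_of_le he, integrableOn_Icc_iff_integrableOn_Ioc,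
            ← intervalIntegrable_iff_integrableOn_Ioc_of_le he]
          exact hpi 0 e le_rfl he)
      rw [uIcc_of_le he] at h
      exact continuousOn_id.add h
    have h2 : e ≤ E e := by
      have := hEsub 0 e le_rfl he
      have := hnn 0 e he
      linarith
    obtain ⟨x, hx, hxe⟩ := intermediate_value_Icc he hcont ⟨hE0.le.trans he, h2⟩
    exact ⟨x, hx.1, hxe⟩
  choose! X hX0 hXE using hsurj
  have hEmono : ∀ a b, 0 ≤ a → 0 ≤ b → E a ≤ E b → a ≤ b := by
    intro a b ha hb h
    by_contra! hlt
    have := hEsub b a hb ha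
    have := hnn b a hlt.le
    linarith
  refine ⟨X, ?_, hX0, ?_, ?_⟩
  · refine le_antisymm (hEmono _ _ (hX0 0 le_rfl) le_rfl ?_) (hX0 0 le_rfl)
    rw [hXE 0 le_rfl, hE0]
  · intro e₁ e₂ h1 h12
    have h2 := h1.trans h12
    have hm : X e₁ ≤ X e₂ := hEmono _ _ (hX0 _ h1) (hX0 _ h2) (by rw [hXE _ h1, hXE _ h2]; exact h12)
    have hs := hEsub _ _ (hX0 _ h1) (hX0 _ h2)
    rw [hXE _ h1, hXE _ h2] at hs
    have hn := hnn _ _ hm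
    refine ⟨hm, by linarith, ?_⟩
    rw [hu₀AC _ (hX0 _ h2), hu₀AC _ (hX0 _ h1),
      intervalIntegral.integral_interval_sub_left (hgi _ _ le_rfl (hX0 _ h2))
        (hgi _ _ le_rfl (hX0 _ h1))]
    have h3 := hgi _ _ (hX0 _ h1) (hX0 _ h2)
    have h4 := hpi _ _ (hX0 _ h1) (hX0 _ h2)
    rw [intervalIntegrable_iff_integrableOn_Ioc_of_le hm] at h3 h4
    have h5 := holder_interval (r := p) (by linarith) hm h3.aestronglyMeasurable h4
    refine (intervalIntegral.abs_integral_le_integral_abs hm).trans (h5.trans ?_)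
    rw [← hlp]
    refine mul_le_mul_of_nonneg_right (Real.rpow_le_rpow hn (by linarith) ?_)
      (Real.rpow_nonneg (by linarith) _)
    rw [hlp]; positivity
  · intro x hx
    have hEx : 0 ≤ E x := by
      have := hEsub 0 x le_rfl hx
      have := hnn 0 x hx
      linarith
    refine ⟨E x, hEx, le_antisymm (hEmono _ _ (hX0 _ hEx) hx (hXE _ hEx).le)
      (hEmono _ _ hx (hX0 _ hEx) (hXE _ hEx).ge)⟩

/-- Length of the part of `[m, m+1]` carrying the original material. -/
noncomputable def del (m : ℕ) : ℝ := 1 / (2 * ((m : ℝ) + 1))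

lemma del_pos (m : ℕ) : 0 < del m := by unfold del; positivity

lemma del_le (m : ℕ) : del m ≤ 1 / 2 := by
  unfold del
  have : (0:ℝ) ≤ m := Nat.cast_nonneg m
  rw [div_le_div_iff₀ (by positivity) (by positivity)]
  linarith

/-- Slowed-down coordinate: `τ` runs at unit speed on `[m, m + del m]` and is frozen on
`[m + del m, m + 1]`, leaving room for inserted material. -/
lemma exists_slowdown : ∃ τ : ℝ → ℝ, τ 0 = 0 ∧ (∀ x y, x ≤ y → τ x ≤ τ y ∧ τ y - τ x ≤ y - x) ∧
    (∀ m : ℕ, ∀ x ∈ Ioo ((m:ℝ) + del m) (m + 1), τ x = τ (m + 1)) ∧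
    Filter.Tendsto (fun n : ℕ => τ n) Filter.atTop Filter.atTop := by
  set P : Set ℝ := ⋃ m : ℕ, Ioo (m:ℝ) (m + del m) with hP
  have hPm : MeasurableSet P := MeasurableSet.iUnion fun m => measurableSet_Ioo
  set χ : ℝ → ℝ := P.indicator fun _ => 1 with hχ
  have hχ0 : ∀ x, 0 ≤ χ x := fun x => indicator_nonneg (fun _ _ => zero_le_one) x
  have hχ1 : ∀ x, χ x ≤ 1 := fun x => indicator_le_self' (fun _ _ => zero_le_one) x
  have hii : ∀ a b, IntervalIntegrable χ volume a b := fun a b => by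
    refine (intervalIntegrable_const (c := (1:ℝ))).mono_fun
      ((measurable_const.indicator hPm).aestronglyMeasurable) ?_
    filter_upwards with x
    rw [Real.norm_eq_abs, abs_of_nonneg (hχ0 x)]; simpa using hχ1 x
  have hsub : ∀ a b, (∫ x in (0:ℝ)..b, χ x) - (∫ x in (0:ℝ)..a, χ x) = ∫ x in a..b, χ x :=
    fun a b => intervalIntegral.integral_interval_sub_left (hii _ _) (hii _ _)
  refine ⟨fun ξ => ∫ x in (0:ℝ)..ξ, χ x, by simp, ?_, ?_, ?_⟩
  · intro x y hxy
    have h1 : 0 ≤ ∫ z in x..y, χ z := intervalIntegral.integral_nonneg hxy fun z _ => hχ0 z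
    have h2 : ∫ z in x..y, χ z ≤ ∫ z in x..y, (1:ℝ) :=
      intervalIntegral.integral_mono_on hxy (hii _ _) intervalIntegrable_const fun z _ => hχ1 z
    rw [intervalIntegral.integral_const, smul_eq_mul, mul_one] at h2
    have := hsub x y
    exact ⟨by linarith, by linarith⟩
  · intro m x hx
    have h1 := hsub x (m + 1)
    have h2 : ∫ z in x..((m:ℝ) + 1), χ z = 0 := by
      rw [intervalIntegral.integral_of_le hx.2.le]
      refine setIntegral_eq_zero_of_forall_eq_zero fun z hz => ?_
      refine indicator_of_notMem ?_ _
      simp only [hP, mem_iUnion, mem_Ioo, not_exists, not_and, not_lt]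
      intro n hn
      have hnm : n < m + 1 := by
        have : (n:ℝ) < ((m + 1 : ℕ) : ℝ) := by push_cast; linarith [hz.2]
        exact_mod_cast this
      rcases Nat.lt_succ_iff_lt_or_eq.mp hnm with h | h
      · have : ((n:ℝ) + 1) ≤ m := by exact_mod_cast h
        linarith [del_le n, hx.1, hz.1, del_pos m]
      · subst h; linarith [hx.1, hz.1]
    linarith
  · have hstep : ∀ m : ℕ, del m ≤ ∫ x in (m:ℝ)..(m + 1), χ x := by
      intro m
      have hd := del_pos m
      have hd' := del_le m
      rw [← intervalIntegral.integral_add_adjacent_intervals (hii _ ((m:ℝ) + del m)) (hii _ _)]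
      have h1 : 0 ≤ ∫ x in ((m:ℝ) + del m)..(m + 1), χ x :=
        intervalIntegral.integral_nonneg (by linarith) fun z _ => hχ0 z
      have h2 : ∫ x in (m:ℝ)..(m + del m), χ x = del m := by
        have : ∫ x in (m:ℝ)..(m + del m), χ x = ∫ x in (m:ℝ)..(m + del m), (1:ℝ) := by
          rw [intervalIntegral.integral_of_le (by linarith),
            intervalIntegral.integral_of_le (by linarith), integral_Ioc_eq_integral_Ioo,
            integral_Ioc_eq_integral_Ioo]
          refine setIntegral_congr_fun measurableSet_Ioo fun x hx => ?_
          exact indicator_of_mem (mem_iUnion.mpr ⟨m, hx⟩) _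
        rw [this]; simp
      linarith
    have hsum : ∀ n : ℕ, (1 / 2) * ∑ i ∈ Finset.range n, 1 / ((i:ℝ) + 1) ≤
        ∫ x in (0:ℝ)..n, χ x := by
      intro n
      induction n with
      | zero => simp
      | succ n ih =>
        rw [Finset.sum_range_succ]
        have h1 := hsub n (n + 1)
        have h2 := hstep n
        have h3 : del n = (1 / 2) * (1 / ((n:ℝ) + 1)) := by unfold del; field_simp
        push_cast
        rw [mul_add, ← h3]; linarith
    refine Filter.tendsto_atTop_mono hsum ?_
    exact Filter.Tendsto.const_mul_atTop (by norm_num)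
      Real.tendsto_sum_range_one_div_nat_succ_atTop

/-- Two Lipschitz functions `A` (monotone) and `B` whose increments satisfy
`|ΔB| ≤ (Δξ)^λ (ΔA)^{1-λ}` are written as `A = ∫ |q₀|^p` and `B = ∫ c |q₀|^{p-2} q₀` with
`|q₀|, |c| ≤ 1`; one takes `c = 1` wherever `q₀ = 0`. -/
lemma exists_lagrangian_data {p lam : ℝ} (hp : 2 ≤ p) (hlp : lam = 1 / p) {A B : ℝ → ℝ}
    (hA0 : A 0 = 0) (hB0 : B 0 = 0)
    (hA : ∀ x y, x ≤ y → A x ≤ A y ∧ A y - A x ≤ y - x)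
    (hB : ∀ x y, x ≤ y → |B y - B x| ≤ (y - x) ^ lam * (A y - A x) ^ (1 - lam)) :
    ∃ q0 c : ℝ → ℝ, Measurable q0 ∧ Measurable c ∧ (∀ ξ, |q0 ξ| ≤ 1) ∧ (∀ ξ, |c ξ| ≤ 1) ∧
      (∀ ξ, HasDerivAt A 1 ξ → HasDerivAt B 0 ξ → q0 ξ = 1 ∧ c ξ = 0) ∧
      (∀ ξ, HasDerivAt A 0 ξ → q0 ξ = 0 ∧ c ξ = 1) ∧
      (∀ ξ, ∫ η in (0:ℝ)..ξ, |q0 η| ^ p = A ξ) ∧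
      (∀ ξ, ∫ η in (0:ℝ)..ξ, c η * G p (q0 η) = B ξ) := by
  have hp0 : 0 < p := by linarith
  have hl0 : 0 < lam := by rw [hlp]; positivity
  have hl1 : lam ≤ 1 / 2 := by
    rw [hlp]; exact one_div_le_one_div_of_le (by norm_num) hp
  have hlp1 : lam * p = 1 := by rw [hlp]; field_simp
  have hAlip : LipschitzWith 1 A := LipschitzWith.of_dist_le_mul fun x y => by
    rw [Real.dist_eq, Real.dist_eq, NNReal.coe_one, one_mul]
    rcases le_total x y with h | h
    · have := hA x y h
      rw [abs_sub_comm, abs_of_nonneg (by linarith), abs_sub_comm, abs_of_nonneg (by linarith)]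
      linarith
    · have := hA y x h
      rw [abs_of_nonneg (by linarith), abs_of_nonneg (by linarith)]; linarith
  have hBle : ∀ x y, x ≤ y → |B y - B x| ≤ y - x := fun x y h => by
    refine (hB x y h).trans ?_
    have h1 := hA x y h
    calc _ ≤ (y - x) ^ lam * (y - x) ^ (1 - lam) :=
          mul_le_mul_of_nonneg_left (Real.rpow_le_rpow (by linarith) h1.2 (by linarith))
            (Real.rpow_nonneg (by linarith) _)
      _ = y - x := by
        rw [← Real.rpow_add' (by linarith) (by norm_num)]; norm_num
  have hBlip : LipschitzWith 1 B := LipschitzWith.of_dist_le_mul fun x y => by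
    rw [Real.dist_eq, Real.dist_eq, NNReal.coe_one, one_mul]
    rcases le_total x y with h | h
    · rw [abs_sub_comm, abs_sub_comm x, abs_of_nonneg (by linarith : 0 ≤ y - x)]
      exact hBle x y h
    · rw [abs_of_nonneg (by linarith : 0 ≤ x - y)]; exact hBle y x h
  have hA'0 : ∀ ξ, 0 ≤ deriv A ξ := fun ξ =>
    (show Monotone A from fun x y h => (hA x y h).1).deriv_nonneg
  have hA'1 : ∀ ξ, deriv A ξ ≤ 1 := fun ξ => by
    have := norm_deriv_le_of_lipschitz hAlip (x₀ := ξ)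
    rw [Real.norm_eq_abs] at this
    exact (le_abs_self _).trans (by simpa using this)
  -- the increment inequality passes to the derivatives
  have hB' : ∀ ξ a b, HasDerivAt A a ξ → HasDerivAt B b ξ → |b| ≤ a ^ (1 - lam) := by
    intro ξ a b ha hb
    have h1 := (hasDerivAt_iff_tendsto_slope.mp ha).mono_left
      (nhdsWithin_mono ξ (show Ioi ξ ⊆ {ξ}ᶜ from fun x hx => (ne_of_gt hx)))
    have h2 := (hasDerivAt_iff_tendsto_slope.mp hb).mono_left
      (nhdsWithin_mono ξ (show Ioi ξ ⊆ {ξ}ᶜ from fun x hx => (ne_of_gt hx)))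
    have h3 := h1.rpow_const (p := 1 - lam) (Or.inr (by linarith))
    refine le_of_tendsto_of_tendsto h2.abs h3 ?_
    filter_upwards [self_mem_nhdsWithin] with y hy
    have hy' : 0 < y - ξ := sub_pos.mpr hy
    have hAy := hA ξ y (le_of_lt hy)
    rw [slope_def_field, slope_def_field, abs_div, abs_of_pos hy', div_le_iff₀ hy',
      Real.div_rpow (by linarith) hy'.le]
    refine (hB ξ y (le_of_lt hy)).trans (le_of_eq ?_)
    have h5 : (y - ξ) = (y - ξ) ^ lam * (y - ξ) ^ (1 - lam) := by
      rw [← Real.rpow_add hy']; norm_num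
    have h6 : (y - ξ) ^ (1 - lam) ≠ 0 := (Real.rpow_pos_of_pos hy' _).ne'
    rw [div_mul_eq_mul_div, eq_div_iff h6]
    conv_rhs => rw [h5]
    ring
  set q0 : ℝ → ℝ := fun ξ => (deriv A ξ) ^ lam with hq0
  set c : ℝ → ℝ := fun ξ => if deriv A ξ = 0 then 1 else deriv B ξ / (deriv A ξ) ^ (1 - lam) with hc
  have hAm : Measurable (deriv A) := measurable_deriv A
  have hBm : Measurable (deriv B) := measurable_deriv B
  have hq0p : ∀ ξ, |q0 ξ| ^ p = deriv A ξ := fun ξ => by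
    simp only [hq0]
    rw [abs_of_nonneg (Real.rpow_nonneg (hA'0 ξ) _), ← Real.rpow_mul (hA'0 ξ), hlp1, Real.rpow_one]
  have hcG : ∀ ξ, DifferentiableAt ℝ A ξ → DifferentiableAt ℝ B ξ →
      c ξ * G p (q0 ξ) = deriv B ξ := by
    intro ξ ha hb
    by_cases h : deriv A ξ = 0
    · have h1 := hB' ξ _ _ ha.hasDerivAt hb.hasDerivAt
      rw [h, Real.zero_rpow (by linarith)] at h1
      have h2 : deriv B ξ = 0 := abs_eq_zero.mp (le_antisymm h1 (abs_nonneg _))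
      simp only [hq0, h, h2, G]
      rw [Real.zero_rpow hl0.ne']; simp
    · have hpos : 0 < deriv A ξ := lt_of_le_of_ne (hA'0 ξ) (Ne.symm h)
      have h1 : G p (q0 ξ) = (deriv A ξ) ^ (1 - lam) := by
        have h2 : 0 < q0 ξ := Real.rpow_pos_of_pos hpos _
        rw [G, abs_of_pos h2, ← Real.rpow_add_one h2.ne']
        simp only [hq0]
        rw [← Real.rpow_mul hpos.le]
        congr 1
        have : lam * (p - 2 + 1) = lam * p - lam := by ring
        rw [this, hlp1]
      rw [h1]
      simp only [hc, if_neg h]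
      have := (Real.rpow_pos_of_pos hpos (1 - lam)).ne'
      field_simp
  refine ⟨q0, c, hAm.pow_const lam, ?_, ?_, ?_, ?_, ?_, ?_, ?_⟩
  · exact Measurable.ite (hAm (measurableSet_singleton 0)) measurable_const
      (hBm.div (hAm.pow_const _))
  · intro ξ
    simp only [hq0]
    rw [abs_of_nonneg (Real.rpow_nonneg (hA'0 ξ) _)]
    exact Real.rpow_le_one (hA'0 ξ) (hA'1 ξ) hl0.le
  · intro ξ
    simp only [hc]
    split_ifs with h
    · simp
    · have hda : DifferentiableAt ℝ A ξ := by
        by_contra h'; exact h (deriv_zero_of_not_differentiableAt h')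
      have hpos : 0 < deriv A ξ := lt_of_le_of_ne (hA'0 ξ) (Ne.symm h)
      have hpp := Real.rpow_pos_of_pos hpos (1 - lam)
      by_cases hdb : DifferentiableAt ℝ B ξ
      · rw [abs_div, abs_of_pos hpp, div_le_one hpp]
        exact hB' ξ _ _ hda.hasDerivAt hdb.hasDerivAt
      · rw [deriv_zero_of_not_differentiableAt hdb]; simp
  · intro ξ ha hb
    simp only [hq0, hc, ha.deriv, hb.deriv]; simp
  · intro ξ ha
    simp only [hq0, hc, ha.deriv, Real.zero_rpow hl0.ne']; simp
  · intro ξ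
    simp only [hq0p]
    rw [((hAlip.lipschitzOnWith (s := uIcc 0 ξ)).absolutelyContinuousOnInterval).integral_deriv_eq_sub,
      hA0, sub_zero]
  · intro ξ
    have h1 := ((hBlip.lipschitzOnWith (s := uIcc 0 ξ)).absolutelyContinuousOnInterval).integral_deriv_eq_sub
    rw [hB0, sub_zero] at h1
    rw [← h1]
    refine intervalIntegral.integral_congr_ae ?_
    filter_upwards [hAlip.ae_differentiableAt_real, hBlip.ae_differentiableAt_real] with x ha hb _
    exact hcG x ha hb

/-- Lagrangian description of the initial datum: original material on `[m, m + del m]`, inserted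
material (`q₀ = 0`, `c = 1`) on `[m + del m, m + 1]`, trivial material (`q₀ = 1`, `c = 0`, so that
`U = 0`) for negative labels. -/
theorem exists_initial {p lam : ℝ} (hp : 2 ≤ p) (hlp : lam = 1 / p) {u₀ g₀ : ℝ → ℝ}
    (hg₀int : ∀ b : ℝ, 0 < b → IntervalIntegrable g₀ volume 0 b)
    (hu₀AC : ∀ x : ℝ, 0 ≤ x → u₀ x = ∫ y in (0:ℝ)..x, g₀ y)
    (hu₀W : ∀ b : ℝ, 0 < b → IntegrableOn (fun x => |g₀ x| ^ p) (Icc 0 b)) :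
    ∃ q0 c : ℝ → ℝ, Measurable q0 ∧ Measurable c ∧ (∀ ξ, |q0 ξ| ≤ 1) ∧ (∀ ξ, |c ξ| ≤ 1) ∧
      (∀ ξ < 0, q0 ξ = 1 ∧ c ξ = 0) ∧
      (∀ m : ℕ, ∀ ξ ∈ Ioo ((m:ℝ) + del m) (m + 1), q0 ξ = 0 ∧ c ξ = 1) ∧
      Filter.Tendsto (fun n : ℕ => ∫ η in (0:ℝ)..n, |q0 η| ^ p) Filter.atTop Filter.atTop ∧
      (∀ ξ, 0 ≤ ξ → ∫ η in (0:ℝ)..ξ, c η * G p (q0 η) = u₀ (∫ η in (0:ℝ)..ξ, |q0 η| ^ p)) := by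
  obtain ⟨X, hX0, hXn, hX, hXs⟩ := exists_energy_coord hp hlp hg₀int hu₀AC hu₀W
  obtain ⟨τ, hτ0, hτ, hτc, hτt⟩ := exists_slowdown
  have hl0 : 0 < lam := by rw [hlp]; positivity
  have hl1 : lam ≤ 1 / 2 := by
    rw [hlp]; exact one_div_le_one_div_of_le (by norm_num) hp
  have hu0 : u₀ 0 = 0 := by rw [hu₀AC 0 le_rfl]; simp
  have hτn : ∀ x, 0 ≤ x → 0 ≤ τ x := fun x hx => by
    have := (hτ 0 x hx).1; rwa [hτ0] at this
  set A : ℝ → ℝ := fun ξ => if ξ ≤ 0 then ξ else X (τ ξ) with hA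
  set B : ℝ → ℝ := fun ξ => if ξ ≤ 0 then 0 else u₀ (X (τ ξ)) with hB
  have hApos : ∀ ξ, 0 ≤ ξ → A ξ = X (τ ξ) := fun ξ h => by
    rcases h.eq_or_lt with h | h
    · subst h; simp [hA, hτ0, hX0]
    · simp [hA, not_le.mpr h]
  have hBpos : ∀ ξ, 0 ≤ ξ → B ξ = u₀ (X (τ ξ)) := fun ξ h => by
    rcases h.eq_or_lt with h | h
    · subst h; simp [hB, hτ0, hX0, hu0]
    · simp [hB, not_le.mpr h]
  have hAneg : ∀ ξ, ξ ≤ 0 → A ξ = ξ := fun ξ h => by simp [hA, h]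
  have hBneg : ∀ ξ, ξ ≤ 0 → B ξ = 0 := fun ξ h => by simp [hB, h]
  have hpp : ∀ x y, 0 ≤ x → x ≤ y → A x ≤ A y ∧ A y - A x ≤ y - x ∧
      |B y - B x| ≤ (y - x) ^ lam * (A y - A x) ^ (1 - lam) := by
    intro x y hx hxy
    have h1 := hτ x y hxy
    have h2 := hX (τ x) (τ y) (hτn x hx) h1.1
    rw [hApos x hx, hApos y (hx.trans hxy), hBpos x hx, hBpos y (hx.trans hxy)]
    refine ⟨h2.1, by linarith, h2.2.2.trans ?_⟩
    exact mul_le_mul_of_nonneg_right (Real.rpow_le_rpow (by linarith) h1.2 hl0.le)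
      (Real.rpow_nonneg (by linarith) _)
  have hall : ∀ x y, x ≤ y → A x ≤ A y ∧ A y - A x ≤ y - x ∧
      |B y - B x| ≤ (y - x) ^ lam * (A y - A x) ^ (1 - lam) := by
    intro x y hxy
    rcases le_total 0 x with hx | hx
    · exact hpp x y hx hxy
    rcases le_total y 0 with hy | hy
    · rw [hAneg x hx, hAneg y hy, hBneg x hx, hBneg y hy]
      refine ⟨hxy, le_rfl, ?_⟩
      rw [sub_self, abs_zero]
      exact mul_nonneg (Real.rpow_nonneg (by linarith) _) (Real.rpow_nonneg (by linarith) _)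
    · have h1 := hpp 0 y le_rfl hy
      rw [hAneg 0 le_rfl, hBneg 0 le_rfl] at h1
      rw [hAneg x hx, hBneg x hx]
      refine ⟨by linarith, by linarith, h1.2.2.trans ?_⟩
      exact mul_le_mul (Real.rpow_le_rpow (by linarith) (by linarith) hl0.le)
        (Real.rpow_le_rpow (by linarith) (by linarith) (by linarith))
        (Real.rpow_nonneg (by linarith) _) (Real.rpow_nonneg (by linarith) _)
  obtain ⟨q0, c, hq0m, hcm, hq01, hc1, hrest, hins, hqA, hcB⟩ :=
    exists_lagrangian_data hp hlp (hAneg 0 le_rfl) (hBneg 0 le_rfl)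
      (fun x y h => ⟨(hall x y h).1, (hall x y h).2.1⟩) (fun x y h => (hall x y h).2.2)
  refine ⟨q0, c, hq0m, hcm, hq01, hc1, ?_, ?_, ?_, ?_⟩
  · intro ξ hξ
    refine hrest ξ ((hasDerivAt_id ξ).congr_of_eventuallyEq ?_)
      ((hasDerivAt_const ξ (0:ℝ)).congr_of_eventuallyEq ?_)
    · filter_upwards [Iio_mem_nhds hξ] with y hy using hAneg y (le_of_lt hy)
    · filter_upwards [Iio_mem_nhds hξ] with y hy using hBneg y (le_of_lt hy)
  · intro m ξ hξ
    refine hins ξ ((hasDerivAt_const ξ (X (τ (m + 1)))).congr_of_eventuallyEq ?_)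
    filter_upwards [Ioo_mem_nhds hξ.1 hξ.2] with y hy
    rw [hApos y, hτc m y hy]
    have : (0:ℝ) ≤ m := Nat.cast_nonneg m
    linarith [hy.1, del_pos m]
  · simp only [hqA]
    rw [Filter.tendsto_atTop]
    intro R
    obtain ⟨e, he, heR⟩ := hXs (max R 0) (le_max_right _ _)
    filter_upwards [hτt.eventually_ge_atTop e] with n hn
    rw [hApos _ (Nat.cast_nonneg n)]
    calc R ≤ max R 0 := le_max_left _ _
      _ = X e := heR.symm
      _ ≤ _ := (hX e _ he hn).1
  · intro ξ hξ
    rw [hqA, hcB, hApos ξ hξ, hBpos ξ hξ]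

/-! ### The flow of characteristics -/

/-- A global solution of the Lagrangian system: `q = q₀ + c a` with
`a(ξ,t) = λ ∫₀ᵗ f''(U(ξ,s)) ds` and `U(ξ,t) = ∫₀^ξ c G(q)`. The functions `f1`, `f2` stand for
`f'`, `f''`. The field `ins` says that the extra singular material (`q₀ = 0`, `c = 1`) fills
`(m + del m, m + 1)` for every `m`. -/
structure Flow where
  p : ℝ
  lam : ℝ
  M : ℝ
  L : ℝ
  f1 : ℝ → ℝ
  f2 : ℝ → ℝ
  q0 : ℝ → ℝ
  c : ℝ → ℝ
  a : ℝ × ℝ → ℝ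
  hp : 2 ≤ p
  hlp : lam = 1 / p
  hM : 0 ≤ M
  hL : 0 ≤ L
  hf1 : ∀ x, HasDerivAt f1 (f2 x) x
  hf10 : 0 ≤ f1 0
  hf2 : ∀ x y, |f2 x - f2 y| ≤ L * |x - y|
  hf2b : ∀ x, |f2 x| ≤ M
  hf2c : Continuous f2
  hq0m : Measurable q0
  hcm : Measurable c
  hq0 : ∀ ξ, |q0 ξ| ≤ 1
  hc : ∀ ξ, |c ξ| ≤ 1
  neg : ∀ ξ < 0, q0 ξ = 1 ∧ c ξ = 0
  ins : ∀ m : ℕ, ∀ ξ ∈ Ioo ((m:ℝ) + del m) (m + 1), q0 ξ = 0 ∧ c ξ = 1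
  tend : Filter.Tendsto (fun n : ℕ => ∫ η in (0:ℝ)..n, |q0 η| ^ p) Filter.atTop Filter.atTop
  ac : Continuous a
  ab : ∀ z, |a z| ≤ lam * M * max z.2 0
  aeq : ∀ ξ t, a (ξ, t) = lam * ∫ s in (0:ℝ)..(max t 0), f2 (Uop p q0 c a ξ s)

namespace Flow

variable (F : Flow)

/-- `|q|^p` is the density of the Eulerian position with respect to the label. -/
noncomputable def q (ξ t : ℝ) : ℝ := F.q0 ξ + F.c ξ * F.a (ξ, t)

/-- The value of the solution along the characteristic with label `ξ`. -/
noncomputable def U (ξ t : ℝ) : ℝ := Uop F.p F.q0 F.c F.a ξ t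

/-- The characteristic with label `ξ`. -/
noncomputable def X (ξ t : ℝ) : ℝ := F.f1 0 * t + ∫ η in (0:ℝ)..ξ, |F.q η t| ^ F.p

/-- A bound for `|q|` up to time `t`. -/
noncomputable def R (t : ℝ) : ℝ := 1 + F.lam * F.M * max t 0

/-- `W = c G(q)`, the label derivative of `U`. -/
noncomputable def W (ξ t : ℝ) : ℝ := F.c ξ * G F.p (F.q ξ t)

lemma lam_pos : 0 < F.lam := by
  have := F.hp
  rw [F.hlp]; positivity

lemma lam_le : F.lam ≤ 1 / 2 := by
  rw [F.hlp]; exact one_div_le_one_div_of_le (by norm_num) F.hp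

lemma lam_p : F.lam * F.p = 1 := by
  have := F.hp
  rw [F.hlp]; field_simp

lemma R_cont : Continuous F.R := by unfold R; fun_prop

lemma R_ge (t : ℝ) : 1 ≤ F.R t := by
  have := F.lam_pos
  have := F.hM
  have : 0 ≤ F.lam * F.M * max t 0 := by positivity
  unfold R; linarith

lemma R_mono {s t : ℝ} (h : s ≤ t) : F.R s ≤ F.R t := by
  have := F.lam_pos
  have := F.hM
  unfold R
  have : F.lam * F.M * max s 0 ≤ F.lam * F.M * max t 0 :=
    mul_le_mul_of_nonneg_left (max_le_max_right 0 h) (by positivity)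
  linarith

lemma q_le (ξ t : ℝ) : |F.q ξ t| ≤ F.R t := abs_q_le F.hq0 F.hc (F.ab (ξ, t))

lemma W_le (ξ t : ℝ) : |F.W ξ t| ≤ F.R t ^ (F.p - 1) := integrand_le F.hp F.hq0 F.hc (F.ab (ξ, t))

lemma qp_nonneg (ξ t : ℝ) : 0 ≤ |F.q ξ t| ^ F.p := Real.rpow_nonneg (abs_nonneg _) _

lemma qp_le (ξ t : ℝ) : |F.q ξ t| ^ F.p ≤ F.R t ^ F.p :=
  Real.rpow_le_rpow (abs_nonneg _) (F.q_le ξ t) (by linarith [F.hp])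

lemma q_meas : Measurable (fun z : ℝ × ℝ => F.q z.1 z.2) := by
  have := F.hq0m
  have := F.hcm
  have := F.ac
  unfold q; fun_prop

lemma q_meas1 (t : ℝ) : Measurable (fun ξ => F.q ξ t) :=
  F.q_meas.comp (measurable_id.prodMk measurable_const)

lemma qp_meas : Measurable (fun z : ℝ × ℝ => |F.q z.1 z.2| ^ F.p) :=
  (continuous_absPow F.hp).measurable.comp F.q_meas

lemma qp_meas1 (t : ℝ) : Measurable (fun ξ => |F.q ξ t| ^ F.p) :=
  (continuous_absPow F.hp).measurable.comp (F.q_meas1 t)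

lemma W_meas : Measurable (fun z : ℝ × ℝ => F.W z.1 z.2) :=
  meas_integrand F.hp F.hq0m F.hcm F.ac

lemma W_meas1 (t : ℝ) : Measurable (fun ξ => F.W ξ t) :=
  F.W_meas.comp (measurable_id.prodMk measurable_const)

lemma W_ii (t a b : ℝ) : IntervalIntegrable (fun ξ => F.W ξ t) volume a b :=
  integrand_ii F.hp F.hq0m F.hcm F.hq0 F.hc F.ac (m := fun t => F.lam * F.M * max t 0) F.ab t a b

lemma qp_ii (t a b : ℝ) : IntervalIntegrable (fun ξ => |F.q ξ t| ^ F.p) volume a b := by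
  refine (intervalIntegrable_const (c := F.R t ^ F.p)).mono_fun
    (F.qp_meas1 t).aestronglyMeasurable ?_
  filter_upwards with η
  rw [Real.norm_eq_abs, abs_of_nonneg (F.qp_nonneg _ _)]
  exact (F.qp_le η t).trans (le_abs_self _)

lemma U_cont : Continuous (fun z : ℝ × ℝ => F.U z.1 z.2) :=
  continuous_Uop F.hp F.hq0m F.hcm F.hq0 F.hc F.ac (m := fun t => F.lam * F.M * max t 0)
    (by fun_prop) F.ab

lemma U_cont2 (ξ : ℝ) : Continuous (fun t => F.U ξ t) :=
  F.U_cont.comp (by fun_prop : Continuous fun t : ℝ => ((ξ, t) : ℝ × ℝ))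

lemma U_sub (ξ η t : ℝ) : F.U ξ t - F.U η t = ∫ y in η..ξ, F.W y t :=
  intervalIntegral.integral_interval_sub_left (F.W_ii t _ _) (F.W_ii t _ _)

lemma U_lip (ξ η t : ℝ) : |F.U ξ t - F.U η t| ≤ F.R t ^ (F.p - 1) * |ξ - η| :=
  Uop_lip F.hp F.hq0 F.hc (m := fun t => F.lam * F.M * max t 0) F.ab t ξ η fun a b => F.W_ii t a b

lemma X_sub (ξ η t : ℝ) : F.X ξ t - F.X η t = ∫ y in η..ξ, |F.q y t| ^ F.p := by
  have := intervalIntegral.integral_interval_sub_left (F.qp_ii t 0 ξ) (F.qp_ii t 0 η)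
  unfold X; rw [← this]; ring

lemma X_mono (t : ℝ) : Monotone (fun ξ => F.X ξ t) := fun η ξ h => by
  have h1 := F.X_sub ξ η t
  have h2 : 0 ≤ ∫ y in η..ξ, |F.q y t| ^ F.p :=
    intervalIntegral.integral_nonneg h fun y _ => F.qp_nonneg y t
  simp only; linarith

lemma X_cont : Continuous (fun z : ℝ × ℝ => F.X z.1 z.2) := by
  have h : Continuous (fun z : ℝ × ℝ => ∫ η in (0:ℝ)..z.2, |F.q η z.1| ^ F.p) := by
    rw [continuous_iff_continuousAt]
    rintro ⟨s, ξ⟩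
    refine intervalIntegral.continuousAt_parametric_primitive_of_dominated
      (F := fun s η => |F.q η s| ^ F.p) (fun _ => (F.R s + 1) ^ F.p)
      (min ξ 0 - 1) (max ξ 0 + 1) (fun x => (F.qp_meas1 x).aestronglyMeasurable)
      ?_ intervalIntegrable_const ?_ ⟨?_, ?_⟩ ⟨?_, ?_⟩ (by simp)
    · have : ∀ᶠ x in nhds s, F.R x < F.R s + 1 :=
        F.R_cont.continuousAt.eventually_lt_const (by linarith)
      filter_upwards [this] with x hx
      filter_upwards with η
      rw [Real.norm_eq_abs, abs_of_nonneg (F.qp_nonneg _ _)]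
      exact (F.qp_le η x).trans (Real.rpow_le_rpow (by linarith [F.R_ge x]) hx.le
        (by linarith [F.hp]))
    · filter_upwards with η
      refine Continuous.continuousAt ((continuous_absPow F.hp).comp ?_)
      have := F.ac
      unfold q; fun_prop
    all_goals first
      | linarith [min_le_left ξ 0, min_le_right ξ 0, le_max_left ξ 0, le_max_right ξ 0]
  have h2 := h.comp continuous_swap
  exact Continuous.add (by fun_prop) h2

lemma X_cont1 (t : ℝ) : Continuous (fun ξ => F.X ξ t) :=
  F.X_cont.comp (by fun_prop : Continuous fun ξ : ℝ => ((ξ, t) : ℝ × ℝ))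

/-! ### Derivatives in time -/

lemma a_deriv (ξ : ℝ) {t : ℝ} (ht : 0 < t) :
    HasDerivAt (fun t => F.a (ξ, t)) (F.lam * F.f2 (F.U ξ t)) t := by
  have hcont : Continuous fun s => F.f2 (F.U ξ s) := F.hf2c.comp (F.U_cont2 ξ)
  have h := (hcont.integral_hasStrictDerivAt 0 t).hasDerivAt.const_mul F.lam
  refine h.congr_of_eventuallyEq ?_
  filter_upwards [Ioi_mem_nhds ht] with s hs
  rw [F.aeq, max_eq_left (le_of_lt hs)]
  rfl

lemma q_deriv (ξ : ℝ) {t : ℝ} (ht : 0 < t) :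
    HasDerivAt (fun t => F.q ξ t) (F.c ξ * (F.lam * F.f2 (F.U ξ t))) t :=
  ((F.a_deriv ξ ht).const_mul (F.c ξ)).const_add (F.q0 ξ)

lemma qp_deriv (ξ : ℝ) {t : ℝ} (ht : 0 < t) :
    HasDerivAt (fun t => |F.q ξ t| ^ F.p) (F.W ξ t * F.f2 (F.U ξ t)) t := by
  have h := (hasDerivAt_absPow F.hp (F.q ξ t)).comp t (F.q_deriv ξ ht)
  refine h.congr_deriv ?_
  unfold W
  calc _ = (F.lam * F.p) * (F.c ξ * G F.p (F.q ξ t) * F.f2 (F.U ξ t)) := by ring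
    _ = _ := by rw [F.lam_p, one_mul]

lemma W_deriv (ξ : ℝ) {t : ℝ} (ht : 0 < t) :
    HasDerivAt (fun t => F.W ξ t)
      ((1 - F.lam) * F.f2 (F.U ξ t) * (F.c ξ ^ 2 * |F.q ξ t| ^ (F.p - 2))) t := by
  have h := ((hasDerivAt_G F.hp (F.q ξ t)).comp t (F.q_deriv ξ ht)).const_mul (F.c ξ)
  refine h.congr_deriv ?_
  have : (F.p - 1) * F.lam = 1 - F.lam := by linarith [F.lam_p]
  rw [← this]; ring

lemma f1_lip (x y : ℝ) : |F.f1 x - F.f1 y| ≤ F.M * |x - y| := by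
  have := convex_univ.norm_image_sub_le_of_norm_hasDerivWithin_le (f := F.f1)
    (f' := F.f2) (C := F.M) (x := y) (y := x)
    (fun x _ => (F.hf1 x).hasDerivWithinAt) (fun x _ => F.hf2b x) (mem_univ _) (mem_univ _)
  simpa [Real.norm_eq_abs] using this

/-- Chain rule for the Lipschitz function `f' ∘ U`. -/
lemma integral_W_f2 (ξ t : ℝ) :
    ∫ η in (0:ℝ)..ξ, F.W η t * F.f2 (F.U η t) = F.f1 (F.U ξ t) - F.f1 0 := by
  have hlip : LipschitzWith (F.M * F.R t ^ (F.p - 1)).toNNReal (fun η => F.f1 (F.U η t)) := by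
    refine LipschitzWith.of_dist_le' fun x y => ?_
    rw [Real.dist_eq, Real.dist_eq, mul_assoc]
    exact (F.f1_lip _ _).trans (mul_le_mul_of_nonneg_left (F.U_lip x y t) F.hM)
  have h1 := (hlip.lipschitzOnWith (s := uIcc 0 ξ)).absolutelyContinuousOnInterval.integral_deriv_eq_sub
  have h0 : F.U 0 t = 0 := by simp [U, Uop]
  rw [h0] at h1
  rw [← h1]
  refine intervalIntegral.integral_congr_ae ?_
  filter_upwards [(F.W_ii t 0 ξ).ae_hasDerivAt_integral] with x hx hxm
  have h2 : HasDerivAt (fun η => F.U η t) (F.W x t) x :=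
    hx (uIoc_subset_uIcc hxm) 0 left_mem_uIcc
  have h3 := ((F.hf1 _).comp x h2).deriv
  rw [mul_comm, ← h3]; rfl

/-- The curves `X(ξ,·)` are the characteristics: their speed is `f'(U)`. Differentiating under the
integral gives `p λ ∫₀^ξ c G(q) f''(U)`, and `p λ = 1`, `c G(q) = U_ξ`. -/
lemma X_deriv (ξ : ℝ) {t : ℝ} (ht : 0 < t) :
    HasDerivAt (fun t => F.X ξ t) (F.f1 (F.U ξ t)) t := by
  have h := intervalIntegral.hasDerivAt_integral_of_dominated_loc_of_deriv_le
    (μ := volume) (a := 0) (b := ξ) (F := fun t η => |F.q η t| ^ F.p)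
    (F' := fun t η => F.W η t * F.f2 (F.U η t)) (x₀ := t) (s := Ioo 0 (t + 1))
    (bound := fun _ => F.R (t + 1) ^ (F.p - 1) * F.M) (Ioo_mem_nhds ht (by linarith))
    (Filter.Eventually.of_forall fun s => (F.qp_meas1 s).aestronglyMeasurable)
    (F.qp_ii t 0 ξ) ?_ ?_ intervalIntegrable_const ?_
  · have h2 := (((hasDerivAt_id t).const_mul (F.f1 0))).add h.2
    refine h2.congr_deriv ?_
    rw [F.integral_W_f2]; ring
  · have h1 : Continuous fun η => F.f2 (F.U η t) :=
      F.hf2c.comp (F.U_cont.comp (by fun_prop : Continuous fun ξ : ℝ => ((ξ, t) : ℝ × ℝ)))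
    exact ((F.W_meas1 t).mul h1.measurable).aestronglyMeasurable
  · filter_upwards with η _ s hs
    rw [Real.norm_eq_abs, abs_mul]
    refine mul_le_mul ((F.W_le η s).trans ?_) (F.hf2b _) (abs_nonneg _) ?_
    · exact Real.rpow_le_rpow (by linarith [F.R_ge s]) (F.R_mono hs.2.le) (by linarith [F.hp])
    · exact Real.rpow_nonneg (by linarith [F.R_ge (t + 1)]) _
  · filter_upwards with η _ s hs
    exact F.qp_deriv η hs.1

/-! ### The characteristics cover the line -/

lemma a_lip {T t : ℝ} (hT : 0 ≤ T) (ht : t ≤ T) (ξ η : ℝ) :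
    |F.a (ξ, t) - F.a (η, t)| ≤ F.lam * (F.L * F.R T ^ (F.p - 1) * T) * |ξ - η| := by
  have hcont : ∀ ξ, Continuous fun s => F.f2 (Uop F.p F.q0 F.c F.a ξ s) :=
    fun ξ => F.hf2c.comp (F.U_cont2 ξ)
  rw [F.aeq, F.aeq, ← mul_sub, abs_mul, abs_of_pos F.lam_pos, mul_assoc,
    ← intervalIntegral.integral_sub ((hcont ξ).intervalIntegrable _ _)
      ((hcont η).intervalIntegrable _ _)]
  refine mul_le_mul_of_nonneg_left ?_ F.lam_pos.le
  have hR : 0 ≤ F.R T := by linarith [F.R_ge T]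
  have h := intervalIntegral.norm_integral_le_of_norm_le_const (a := 0) (b := max t 0)
    (C := F.L * (F.R T ^ (F.p - 1) * |ξ - η|))
    (f := fun s => F.f2 (Uop F.p F.q0 F.c F.a ξ s) - F.f2 (Uop F.p F.q0 F.c F.a η s)) ?_
  · refine h.trans ?_
    have h1 : |max t 0 - 0| ≤ T := by
      rw [sub_zero, abs_of_nonneg (le_max_right _ _)]; exact max_le ht hT
    have := F.hL
    calc _ ≤ F.L * (F.R T ^ (F.p - 1) * |ξ - η|) * T := mul_le_mul_of_nonneg_left h1 (by positivity)
      _ = _ := by ring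
  · intro s hs
    rw [uIoc_of_le (le_max_right _ _)] at hs
    have hs' : s ≤ T := hs.2.trans (max_le ht hT)
    refine (F.hf2 _ _).trans (mul_le_mul_of_nonneg_left ?_ F.hL)
    refine (F.U_lip ξ η s).trans (mul_le_mul_of_nonneg_right ?_ (abs_nonneg _))
    exact Real.rpow_le_rpow (by linarith [F.R_ge s]) (F.R_mono hs') (by linarith [F.hp])

lemma add3_rpow {p x y z : ℝ} (hp : 0 ≤ p) (hx : 0 ≤ x) (hy : 0 ≤ y) (hz : 0 ≤ z) :
    (x + y + z) ^ p ≤ 3 ^ p * (x ^ p + y ^ p + z ^ p) := by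
  have hm : 0 ≤ max x (max y z) := le_max_of_le_left hx
  have h1 : x + y + z ≤ 3 * max x (max y z) := by
    have := le_max_left x (max y z)
    have h2 := le_max_right x (max y z)
    have := (le_max_left y z).trans h2
    have := (le_max_right y z).trans h2
    linarith
  have h2 : (max x (max y z)) ^ p ≤ x ^ p + y ^ p + z ^ p := by
    have := Real.rpow_nonneg hx p
    have := Real.rpow_nonneg hy p
    have := Real.rpow_nonneg hz p
    rcases max_choice x (max y z) with h | h
    · rw [h]; linarith
    · rw [h]
      rcases max_choice y z with h | h <;> rw [h] <;> linarith
  calc (x + y + z) ^ p ≤ (3 * max x (max y z)) ^ p := Real.rpow_le_rpow (by positivity) h1 hp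
    _ = 3 ^ p * (max x (max y z)) ^ p := Real.mul_rpow (by norm_num) hm
    _ ≤ _ := mul_le_mul_of_nonneg_left h2 (by positivity)

/-- On each unit cell, the initial length is controlled by the length at time `t`: the inserted
material sees the same `a`, up to a Lipschitz error, as the material next to it. -/
lemma cell_bound {T : ℝ} (hT : 0 ≤ T) : ∃ K B : ℝ, 0 < K ∧ 0 ≤ B ∧ ∀ t ≤ T, ∀ m : ℕ,
    ∫ η in (m:ℝ)..(m + 1 : ℝ), |F.q0 η| ^ F.p ≤
      K * (∫ η in (m:ℝ)..(m + 1 : ℝ), |F.q η t| ^ F.p) + B * (del m) ^ 2 := by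
  have hp := F.hp
  set B := F.lam * (F.L * F.R T ^ (F.p - 1) * T) with hB
  have hB0 : 0 ≤ B := by
    have := F.lam_pos
    have := F.hL
    have hR : 0 ≤ F.R T := by linarith [F.R_ge T]
    positivity
  refine ⟨3 ^ F.p, 3 ^ F.p * B ^ F.p, by positivity, by positivity, fun t ht m => ?_⟩
  have hd0 := del_pos m
  have hd1 := del_le m
  set d := del m with hd
  have hq0ii : ∀ a b, IntervalIntegrable (fun η => |F.q0 η| ^ F.p) volume a b := fun a b => by
    refine (intervalIntegrable_const (c := (1:ℝ))).mono_fun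
      ((continuous_absPow F.hp).measurable.comp F.hq0m).aestronglyMeasurable ?_
    filter_upwards with η
    rw [Real.norm_eq_abs, abs_of_nonneg (Real.rpow_nonneg (abs_nonneg _) _)]
    simpa using Real.rpow_le_one (abs_nonneg _) (F.hq0 η) (by linarith)
  have h1 : ∫ η in (m + d : ℝ)..(m + 1 : ℝ), |F.q0 η| ^ F.p = 0 := by
    rw [intervalIntegral.integral_of_le (by linarith), setIntegral_congr_set Ioo_ae_eq_Ioc.symm]
    refine setIntegral_eq_zero_of_forall_eq_zero fun x hx => ?_
    rw [(F.ins m x hx).1, abs_zero, Real.zero_rpow (by linarith)]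
  rw [← intervalIntegral.integral_add_adjacent_intervals (hq0ii m (m + d)) (hq0ii _ _), h1, add_zero]
  have hsh : IntervalIntegrable (fun η => |F.q (η + d) t| ^ F.p) volume m (m + d) := by
    refine (intervalIntegrable_const (c := F.R t ^ F.p)).mono_fun
      ((F.qp_meas1 t).comp (measurable_id.add_const d)).aestronglyMeasurable ?_
    filter_upwards with η
    rw [Real.norm_eq_abs, abs_of_nonneg (F.qp_nonneg _ _)]
    exact (F.qp_le _ t).trans (le_abs_self _)
  have h2 : ∫ η in (m:ℝ)..(m + d : ℝ), |F.q0 η| ^ F.p ≤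
      ∫ η in (m:ℝ)..(m + d : ℝ), 3 ^ F.p * (|F.q η t| ^ F.p + |F.q (η + d) t| ^ F.p + (B * d) ^ F.p) := by
    refine intervalIntegral.integral_mono_on_of_le_Ioo (by linarith) (hq0ii _ _)
      ((((F.qp_ii t _ _).add hsh).add intervalIntegrable_const).const_mul _) fun x hx => ?_
    refine le_trans (Real.rpow_le_rpow (abs_nonneg _) ?_ (by linarith))
      (add3_rpow (by linarith) (abs_nonneg _) (abs_nonneg _) (by positivity))
    have hi := F.ins m (x + d) ⟨by linarith [hx.1], by linarith [hx.2]⟩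
    have hq1 : F.q (x + d) t = F.a (x + d, t) := by simp [q, hi.1, hi.2]
    have hq2 : F.q0 x = F.q x t - F.c x * F.a (x, t) := by simp [q]
    have hl := F.a_lip hT ht x (x + d)
    have hl' : |x - (x + d)| = d := by rw [show x - (x + d) = -d by ring, abs_neg, abs_of_pos hd0]
    rw [hl', ← hB] at hl
    rw [hq1, hq2]
    have h3 : |F.c x * F.a (x, t)| ≤ |F.a (x, t)| := by
      rw [abs_mul]
      exact mul_le_of_le_one_left (abs_nonneg _) (F.hc x)
    have h4 := abs_sub (F.q x t) (F.c x * F.a (x, t))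
    have h5 := abs_sub_abs_le_abs_sub (F.a (x, t)) (F.a (x + d, t))
    linarith
  refine h2.trans ?_
  rw [intervalIntegral.integral_const_mul, intervalIntegral.integral_add
    ((F.qp_ii t _ _).add hsh) intervalIntegrable_const, intervalIntegral.integral_add
    (F.qp_ii t _ _) hsh, intervalIntegral.integral_comp_add_right (fun η => |F.q η t| ^ F.p) d,
    intervalIntegral.integral_add_adjacent_intervals (F.qp_ii t _ _) (F.qp_ii t _ _),
    intervalIntegral.integral_const]
  have h6 : ∫ η in (m:ℝ)..(m + d + d : ℝ), |F.q η t| ^ F.p ≤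
      ∫ η in (m:ℝ)..(m + 1 : ℝ), |F.q η t| ^ F.p :=
    intervalIntegral.integral_mono_interval le_rfl (by linarith) (by linarith)
      (by filter_upwards with x using F.qp_nonneg x t) (F.qp_ii t _ _)
  have h7 : (m + d - m : ℝ) • (B * d) ^ F.p ≤ B ^ F.p * d ^ 2 := by
    rw [Real.mul_rpow hB0 hd0.le, smul_eq_mul]
    have h8 : d ^ F.p ≤ d ^ (1:ℝ) :=
      Real.rpow_le_rpow_of_exponent_ge hd0 (by linarith) (by linarith)
    rw [Real.rpow_one] at h8
    have h9 : 0 ≤ B ^ F.p := by positivity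
    calc _ = B ^ F.p * (d * d ^ F.p) := by ring
      _ ≤ B ^ F.p * (d * d) := by gcongr
      _ = _ := by ring
  calc _ ≤ 3 ^ F.p * ((∫ η in (m:ℝ)..(m + 1 : ℝ), |F.q η t| ^ F.p) + B ^ F.p * d ^ 2) := by
        gcongr
    _ = _ := by ring

/-- The characteristics are proper, locally uniformly in time. This is where the inserted material is
needed, as the original material alone might be compressed into a bounded interval; the errors
`(del m)²` of `cell_bound` are summable. -/
lemma X_large (T r : ℝ) (hT : 0 ≤ T) : ∃ N : ℕ, ∀ t, -T ≤ t → t ≤ T → r ≤ F.X N t := by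
  obtain ⟨K, B, hK, hB, hcell⟩ := F.cell_bound hT
  have hsum : Summable fun m : ℕ => (del m) ^ 2 := by
    have h := (summable_nat_add_iff 1).mpr (Real.summable_one_div_nat_pow.mpr one_lt_two)
    refine (h.mul_left (1 / 4)).congr fun m => ?_
    unfold del; push_cast; field_simp; norm_num
  set S := ∑' m : ℕ, (del m) ^ 2 with hS
  have hq0ii : ∀ a b, IntervalIntegrable (fun η => |F.q0 η| ^ F.p) volume a b := fun a b => by
    have hp := F.hp
    refine (intervalIntegrable_const (c := (1:ℝ))).mono_fun
      ((continuous_absPow F.hp).measurable.comp F.hq0m).aestronglyMeasurable ?_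
    filter_upwards with η
    rw [Real.norm_eq_abs, abs_of_nonneg (Real.rpow_nonneg (abs_nonneg _) _)]
    simpa using Real.rpow_le_one (abs_nonneg _) (F.hq0 η) (by linarith)
  have htot : ∀ t ≤ T, ∀ N : ℕ, ∫ η in (0:ℝ)..N, |F.q0 η| ^ F.p ≤
      K * (∫ η in (0:ℝ)..N, |F.q η t| ^ F.p) + B * S := by
    intro t ht N
    have e1 := intervalIntegral.sum_integral_adjacent_intervals (f := fun η => |F.q0 η| ^ F.p)
      (a := fun k : ℕ => (k:ℝ)) (n := N) (μ := volume) fun k _ => hq0ii _ _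
    have e2 := intervalIntegral.sum_integral_adjacent_intervals (f := fun η => |F.q η t| ^ F.p)
      (a := fun k : ℕ => (k:ℝ)) (n := N) (μ := volume) fun k _ => F.qp_ii t _ _
    simp only [Nat.cast_zero] at e1 e2
    rw [← e1, ← e2, Finset.mul_sum]
    have h3 : B * ∑ m ∈ Finset.range N, (del m) ^ 2 ≤ B * S :=
      mul_le_mul_of_nonneg_left (hsum.sum_le_tsum _ fun _ _ => sq_nonneg _) hB
    refine le_trans (Finset.sum_le_sum fun m _ => ?_)
      (le_trans (le_of_eq Finset.sum_add_distrib) (add_le_add_right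
        (le_trans (le_of_eq (Finset.mul_sum _ _ _).symm) h3) _))
    push_cast
    exact hcell t ht m
  obtain ⟨N, hN⟩ := (F.tend.eventually_ge_atTop (K * (r + F.f1 0 * T) + B * S)).exists
  refine ⟨N, fun t h1 h2 => ?_⟩
  have h3 := htot t h2 N
  have h4 : r + F.f1 0 * T ≤ ∫ η in (0:ℝ)..N, |F.q η t| ^ F.p :=
    le_of_mul_le_mul_left (by linarith) hK
  have h5 : F.f1 0 * (-T) ≤ F.f1 0 * t := mul_le_mul_of_nonneg_left h1 F.hf10
  unfold X; linarith

lemma q_neg {ξ : ℝ} (h : ξ < 0) (t : ℝ) : F.q ξ t = 1 := by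
  simp [q, (F.neg ξ h).1, (F.neg ξ h).2]

lemma X_neg {ξ : ℝ} (h : ξ ≤ 0) (t : ℝ) : F.X ξ t = F.f1 0 * t + ξ := by
  unfold X
  rw [intervalIntegral.integral_symm, intervalIntegral.integral_of_le h,
    setIntegral_congr_set Ioo_ae_eq_Ioc.symm,
    setIntegral_congr_fun (g := fun _ => (1:ℝ)) measurableSet_Ioo fun x hx => by
      simp [F.q_neg hx.2]]
  simp [h]

lemma U_neg {ξ : ℝ} (h : ξ ≤ 0) (t : ℝ) : F.U ξ t = 0 := by
  have h2 : F.U ξ t = ∫ y in (0:ℝ)..ξ, F.W y t := rfl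
  rw [h2, intervalIntegral.integral_symm, intervalIntegral.integral_of_le h,
    setIntegral_congr_set Ioo_ae_eq_Ioc.symm, setIntegral_eq_zero_of_forall_eq_zero, neg_zero]
  intro x hx
  simp [W, (F.neg x hx.2).2]

/-! ### Eulerian coordinates -/

/-- The left-most label whose characteristic has reached `y` at time `t`. -/
noncomputable def Z (y t : ℝ) : ℝ := sInf {ξ | y ≤ F.X ξ t}

/-- The solution in Eulerian coordinates. -/
noncomputable def u (y t : ℝ) : ℝ := F.U (F.Z y t) t

/-- The spatial derivative of the solution in Eulerian coordinates. It takes the junk value `0` where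
`q = 0`. -/
noncomputable def ux (y t : ℝ) : ℝ := F.c (F.Z y t) / F.q (F.Z y t) t

lemma exists_X_le (y t : ℝ) : ∃ ξ ≤ 0, F.X ξ t ≤ y := by
  refine ⟨min 0 (y - F.f1 0 * t), min_le_left _ _, ?_⟩
  rw [F.X_neg (min_le_left _ _)]
  linarith [min_le_right 0 (y - F.f1 0 * t)]

lemma exists_le_X (y t : ℝ) : ∃ ξ, 0 ≤ ξ ∧ y ≤ F.X ξ t := by
  obtain ⟨N, hN⟩ := F.X_large |t| y (abs_nonneg t)
  exact ⟨N, Nat.cast_nonneg N, hN t (neg_abs_le t) (le_abs_self t)⟩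

/-- `Z(·,t)` is the lower adjoint of `X(·,t)`. -/
lemma le_X_iff (y ξ t : ℝ) : y ≤ F.X ξ t ↔ F.Z y t ≤ ξ := by
  have hne : {ξ | y ≤ F.X ξ t}.Nonempty := by
    obtain ⟨ξ, -, h⟩ := F.exists_le_X y t
    exact ⟨ξ, h⟩
  have hbdd : BddBelow {ξ | y ≤ F.X ξ t} := by
    obtain ⟨η, -, h⟩ := F.exists_X_le (y - 1) t
    refine ⟨η, fun ξ (hξ : y ≤ F.X ξ t) => ?_⟩
    by_contra! hlt
    have := F.X_mono t hlt.le
    simp only at this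
    linarith
  have hcl : IsClosed {ξ | y ≤ F.X ξ t} := isClosed_le continuous_const (F.X_cont1 t)
  refine ⟨fun h => csInf_le hbdd h, fun h => ?_⟩
  have hm : y ≤ F.X (F.Z y t) t := hcl.csInf_mem hne hbdd
  exact hm.trans (F.X_mono t h)

lemma X_Z (y t : ℝ) : F.X (F.Z y t) t = y := by
  refine le_antisymm ?_ ((F.le_X_iff y _ t).mpr le_rfl)
  obtain ⟨a, ha, h1⟩ := F.exists_X_le y t
  obtain ⟨b, hb, h2⟩ := F.exists_le_X y t
  obtain ⟨ξ, -, hξ⟩ := intermediate_value_Icc (ha.trans hb) (F.X_cont1 t).continuousOn ⟨h1, h2⟩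
  have : F.Z y t ≤ ξ := (F.le_X_iff y ξ t).mp hξ.ge
  exact (F.X_mono t this).trans hξ.le

lemma X_lt_iff (y ξ t : ℝ) : F.X ξ t < y ↔ ξ < F.Z y t := by
  rw [← not_le, ← not_le, F.le_X_iff]

lemma Z_mono (t : ℝ) : Monotone (fun y => F.Z y t) := fun y y' h => by
  rw [← F.le_X_iff, F.X_Z]; exact h

lemma Z_meas : Measurable (fun z : ℝ × ℝ => F.Z z.1 z.2) := by
  refine measurable_of_Iic fun ξ => ?_
  have : (fun z : ℝ × ℝ => F.Z z.1 z.2) ⁻¹' Iic ξ = {z | z.1 ≤ F.X ξ z.2} := by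
    ext z; simp [F.le_X_iff]
  rw [this]
  have h : Continuous fun z : ℝ × ℝ => F.X ξ z.2 :=
    F.X_cont.comp (by fun_prop : Continuous fun z : ℝ × ℝ => ((ξ, z.2) : ℝ × ℝ))
  exact (isClosed_le continuous_fst h).measurableSet

lemma ux_meas : Measurable (fun z : ℝ × ℝ => F.ux z.1 z.2) := by
  have h1 : Measurable fun z : ℝ × ℝ => F.c (F.Z z.1 z.2) := F.hcm.comp F.Z_meas
  have h2 : Measurable fun z : ℝ × ℝ => F.q (F.Z z.1 z.2) z.2 :=
    F.q_meas.comp (F.Z_meas.prodMk measurable_snd)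
  exact h1.div h2

lemma u_meas : Measurable (fun z : ℝ × ℝ => F.u z.1 z.2) :=
  F.U_cont.measurable.comp (F.Z_meas.prodMk measurable_snd)

lemma ux_meas1 (t : ℝ) : Measurable (fun y => F.ux y t) :=
  F.ux_meas.comp (measurable_id.prodMk measurable_const)

/-- Hölder's inequality in label coordinates: `|U_ξ| ≤ |q|^{p-1}` while `X_ξ = |q|^p`. -/
lemma U_holder (ξ η t : ℝ) : |F.U ξ t - F.U η t| ≤
    |F.X ξ t - F.X η t| ^ (1 - F.lam) * |ξ - η| ^ F.lam := by
  wlog h : η ≤ ξ generalizing ξ η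
  · have := this η ξ (le_of_not_ge h)
    rwa [abs_sub_comm, abs_sub_comm (F.X ξ t), abs_sub_comm ξ]
  have hp := F.hp
  have hp1 : F.p - 1 ≠ 0 := by linarith
  have hp0 : F.p ≠ 0 := by linarith
  set r := F.p / (F.p - 1) with hr
  have hr1 : 1 < r := by rw [hr, lt_div_iff₀ (by linarith)]; linarith
  have hWr : ∀ y, |F.W y t| ^ r ≤ |F.q y t| ^ F.p := by
    intro y
    have h1 : |F.W y t| ≤ |F.q y t| ^ (F.p - 1) := by
      unfold W
      rw [abs_mul, abs_G F.hp]
      exact mul_le_of_le_one_left (Real.rpow_nonneg (abs_nonneg _) _) (F.hc y)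
    refine (Real.rpow_le_rpow (abs_nonneg _) h1 (by linarith)).trans (le_of_eq ?_)
    rw [← Real.rpow_mul (abs_nonneg _)]
    congr 1
    rw [hr]; field_simp
  have hWi : IntegrableOn (fun y => |F.W y t| ^ r) (Ioc η ξ) := by
    have h1 := (F.qp_ii t η ξ)
    rw [intervalIntegrable_iff_integrableOn_Ioc_of_le h] at h1
    refine Integrable.mono' h1 ((F.W_meas1 t).abs.pow_const r).aestronglyMeasurable ?_
    filter_upwards with y
    rw [Real.norm_eq_abs, abs_of_nonneg (Real.rpow_nonneg (abs_nonneg _) _)]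
    exact hWr y
  have h2 := holder_interval hr1 h (F.W_meas1 t).aestronglyMeasurable hWi
  rw [F.U_sub, F.X_sub, abs_of_nonneg (intervalIntegral.integral_nonneg h fun y _ => F.qp_nonneg y t),
    abs_of_nonneg (sub_nonneg.mpr h)]
  have e1 : 1 / r = 1 - F.lam := by rw [hr, F.hlp]; field_simp
  have e2 : 1 - 1 / r = F.lam := by rw [e1]; ring
  rw [e2, e1] at h2
  refine (intervalIntegral.abs_integral_le_integral_abs h).trans (h2.trans ?_)
  refine mul_le_mul_of_nonneg_right (Real.rpow_le_rpow ?_ ?_ (by linarith [F.lam_le]))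
    (Real.rpow_nonneg (by linarith) _)
  · exact intervalIntegral.integral_nonneg h fun y _ => Real.rpow_nonneg (abs_nonneg _) _
  · refine intervalIntegral.integral_mono_on h ?_ (F.qp_ii t _ _) fun y _ => hWr y
    rw [intervalIntegrable_iff_integrableOn_Ioc_of_le h]; exact hWi

/-- The value of `u` at `X(ξ,t)` does not depend on the label chosen, since `U` is constant where `X` is. -/
lemma u_X (ξ t : ℝ) : F.u (F.X ξ t) t = F.U ξ t := by
  have h := F.U_holder (F.Z (F.X ξ t) t) ξ t
  rw [F.X_Z, sub_self, abs_zero, Real.zero_rpow (by linarith [F.lam_le]), zero_mul] at h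
  exact sub_eq_zero.mp (abs_nonpos_iff.mp h)

/-! ### Change of variables -/

/-- The measure `|q|^p dξ` at time `t`. -/
noncomputable def mu (t : ℝ) : Measure ℝ :=
  volume.withDensity fun ξ => ENNReal.ofReal (|F.q ξ t| ^ F.p)

/-- The measure `|q|^p dξ dt`. -/
noncomputable def nu : Measure (ℝ × ℝ) :=
  volume.withDensity fun z => ENNReal.ofReal (|F.q z.1 z.2| ^ F.p)

lemma X_preimage (t a b : ℝ) : (fun ξ => F.X ξ t) ⁻¹' Ico a b = Ico (F.Z a t) (F.Z b t) := by
  ext ξ; simp [F.le_X_iff, F.X_lt_iff]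

/-- `X(·,t)` pushes `|q|^p dξ` forward to Lebesgue measure. -/
lemma map_mu (t : ℝ) : (F.mu t).map (fun ξ => F.X ξ t) = volume := by
  symm
  refine Measure.ext_of_Ico volume _ fun a b hab => ?_
  have hZ : F.Z a t ≤ F.Z b t := F.Z_mono t hab.le
  rw [Measure.map_apply (F.X_cont1 t).measurable measurableSet_Ico, F.X_preimage, mu,
    withDensity_apply _ measurableSet_Ico, Real.volume_Ico]
  have hi : IntegrableOn (fun ξ => |F.q ξ t| ^ F.p) (Ico (F.Z a t) (F.Z b t)) := by
    have := F.qp_ii t (F.Z a t) (F.Z b t)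
    rw [intervalIntegrable_iff_integrableOn_Ico_of_le hZ] at this
    exact this
  rw [← ofReal_integral_eq_lintegral_ofReal hi
    (by filter_upwards with ξ using F.qp_nonneg ξ t), integral_Ico_eq_integral_Ioc,
    ← intervalIntegral.integral_of_le hZ, ← F.X_sub, F.X_Z, F.X_Z]

lemma Z_X_le (ξ t : ℝ) : F.Z (F.X ξ t) t ≤ ξ := (F.le_X_iff _ _ _).mp le_rfl

/-- Labels that are not recovered from their position lie in a flat piece of `X(·,t)`; there are
countably many such pieces, and each maps to a point. -/
lemma mu_bad (t : ℝ) : F.mu t {ξ | F.Z (F.X ξ t) t ≠ ξ} = 0 := by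
  set D : Set ℝ := (fun r : ℚ => F.X r t) '' univ with hD
  have hDc : D.Countable := countable_univ.image _
  have h0 : F.mu t ((fun ξ => F.X ξ t) ⁻¹' D) = 0 := by
    rw [← Measure.map_apply (F.X_cont1 t).measurable hDc.measurableSet, F.map_mu]
    exact hDc.measure_zero _
  refine measure_mono_null (fun ξ hξ => ?_) h0
  have hlt : F.Z (F.X ξ t) t < ξ := lt_of_le_of_ne (F.Z_X_le ξ t) hξ
  obtain ⟨r, h1, h2⟩ := exists_rat_btwn hlt
  refine ⟨r, mem_univ _, le_antisymm (F.X_mono t h2.le) ?_⟩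
  exact (F.le_X_iff _ _ _).mpr h1.le

lemma dens_meas : Measurable fun z : ℝ × ℝ => ENNReal.ofReal (|F.q z.1 z.2| ^ F.p) :=
  F.qp_meas.ennreal_ofReal

lemma dens_meas1 (t : ℝ) : Measurable fun ξ : ℝ => ENNReal.ofReal (|F.q ξ t| ^ F.p) :=
  (F.qp_meas1 t).ennreal_ofReal

lemma nu_apply {A : Set (ℝ × ℝ)} (hA : MeasurableSet A) :
    F.nu A = ∫⁻ t, F.mu t {ξ | (ξ, t) ∈ A} := by
  rw [nu, withDensity_apply _ hA, ← lintegral_indicator hA, Measure.volume_eq_prod,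
    lintegral_prod_symm' _ (F.dens_meas.indicator hA)]
  refine lintegral_congr fun t => ?_
  have hAt : MeasurableSet {ξ | (ξ, t) ∈ A} := measurable_prodMk_right hA
  rw [mu, withDensity_apply _ hAt, ← lintegral_indicator hAt]
  rfl

/-- The Lagrangian-to-Eulerian map. -/
noncomputable def Psi (z : ℝ × ℝ) : ℝ × ℝ := (F.X z.1 z.2, z.2)

lemma Psi_cont : Continuous F.Psi := F.X_cont.prodMk continuous_snd

lemma map_nu : F.nu.map F.Psi = volume := by
  rw [Measure.volume_eq_prod]
  symm
  refine Measure.prod_eq fun s t hs ht => ?_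
  rw [Measure.map_apply F.Psi_cont.measurable (hs.prod ht),
    F.nu_apply (F.Psi_cont.measurable (hs.prod ht))]
  have : ∀ τ, F.mu τ {ξ | (ξ, τ) ∈ F.Psi ⁻¹' (s ×ˢ t)} = t.indicator (fun _ => volume s) τ := by
    intro τ
    by_cases hτ : τ ∈ t
    · have e : {ξ | (ξ, τ) ∈ F.Psi ⁻¹' (s ×ˢ t)} = (fun ξ => F.X ξ τ) ⁻¹' s := by
        ext ξ; simp [Psi, hτ]
      rw [e, indicator_of_mem hτ, ← Measure.map_apply (F.X_cont1 τ).measurable hs, F.map_mu]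
    · have e : {ξ | (ξ, τ) ∈ F.Psi ⁻¹' (s ×ˢ t)} = ∅ := by
        ext ξ; simp [Psi, hτ]
      rw [e, indicator_of_notMem hτ, measure_empty]
  simp_rw [this]
  rw [lintegral_indicator ht, setLIntegral_const]

lemma ae_Z_X (t : ℝ) : ∀ᵐ ξ, F.q ξ t ≠ 0 → F.Z (F.X ξ t) t = ξ := by
  have h : ∀ᵐ ξ ∂(F.mu t), F.Z (F.X ξ t) t = ξ := F.mu_bad t
  rw [mu, ae_withDensity_iff (F.dens_meas1 t)] at h
  filter_upwards [h] with ξ hξ hq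
  refine hξ ?_
  have : 0 < |F.q ξ t| ^ F.p := Real.rpow_pos_of_pos (abs_pos.mpr hq) _
  simpa using this

lemma ae_Z_X2 : ∀ᵐ z : ℝ × ℝ, F.q z.1 z.2 ≠ 0 → F.Z (F.X z.1 z.2) z.2 = z.1 := by
  have h : ∀ᵐ z ∂F.nu, F.Z (F.X z.1 z.2) z.2 = z.1 := by
    rw [ae_iff, F.nu_apply]
    · rw [lintegral_eq_zero_iff']
      · filter_upwards with t
        exact F.mu_bad t
      · have : (fun t => F.mu t {ξ | (ξ, t) ∈ {z : ℝ × ℝ | ¬F.Z (F.X z.1 z.2) z.2 = z.1}}) =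
            fun _ => 0 := by
          funext t; exact F.mu_bad t
        rw [this]; exact aemeasurable_const
    · have h1 : Measurable fun z : ℝ × ℝ => F.Z (F.X z.1 z.2) z.2 :=
        F.Z_meas.comp F.Psi_cont.measurable
      exact (measurableSet_eq_fun h1 measurable_fst).compl
  rw [nu, ae_withDensity_iff F.dens_meas] at h
  filter_upwards [h] with z hz hq
  refine hz ?_
  have : 0 < |F.q z.1 z.2| ^ F.p := Real.rpow_pos_of_pos (abs_pos.mpr hq) _
  simpa using this

lemma change2 {g : ℝ × ℝ → ℝ} (hg : Measurable g) :
    ∫ z, g z = ∫ z : ℝ × ℝ, |F.q z.1 z.2| ^ F.p * g (F.X z.1 z.2, z.2) := by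
  conv_lhs => rw [← F.map_nu]
  rw [integral_map F.Psi_cont.measurable.aemeasurable hg.aestronglyMeasurable, nu,
    integral_withDensity_eq_integral_toReal_smul F.dens_meas (by simp)]
  refine integral_congr_ae (Filter.Eventually.of_forall fun z => ?_)
  simp only [smul_eq_mul]
  rw [ENNReal.toReal_ofReal (F.qp_nonneg _ _)]
  rfl

lemma change1 (t : ℝ) {g : ℝ → ℝ} (hg : Measurable g) :
    (Integrable g ↔ Integrable fun ξ => |F.q ξ t| ^ F.p * g (F.X ξ t)) ∧
    ∫ y, g y = ∫ ξ, |F.q ξ t| ^ F.p * g (F.X ξ t) := by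
  have e : ∀ ξ, (ENNReal.ofReal (|F.q ξ t| ^ F.p)).toReal • g (F.X ξ t) =
      |F.q ξ t| ^ F.p * g (F.X ξ t) := fun ξ => by
    rw [ENNReal.toReal_ofReal (F.qp_nonneg _ _), smul_eq_mul]
  constructor
  · conv_lhs => rw [← F.map_mu t]
    rw [integrable_map_measure hg.aestronglyMeasurable (F.X_cont1 t).measurable.aemeasurable, mu,
      integrable_withDensity_iff_integrable_smul' (F.dens_meas1 t) (by simp)]
    simp only [Function.comp, e]
  · conv_lhs => rw [← F.map_mu t]
    rw [integral_map (F.X_cont1 t).measurable.aemeasurable hg.aestronglyMeasurable, mu,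
      integral_withDensity_eq_integral_toReal_smul (F.dens_meas1 t) (by simp)]
    simp only [e]

lemma change_Ico (t : ℝ) {g : ℝ → ℝ} (hg : Measurable g) {C : ℝ}
    (hC : ∀ᵐ ξ, |(|F.q ξ t| ^ F.p * g (F.X ξ t))| ≤ C) (a b : ℝ) :
    IntegrableOn g (Ico a b) ∧
      ∫ y in Ico a b, g y = ∫ ξ in Ico (F.Z a t) (F.Z b t), |F.q ξ t| ^ F.p * g (F.X ξ t) := by
  have h := F.change1 t (hg.indicator (measurableSet_Ico (a := a) (b := b)))
  have e : (fun ξ => |F.q ξ t| ^ F.p * (Ico a b).indicator g (F.X ξ t)) =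
      (Ico (F.Z a t) (F.Z b t)).indicator fun ξ => |F.q ξ t| ^ F.p * g (F.X ξ t) := by
    rw [← F.X_preimage]
    funext ξ
    by_cases hξ : F.X ξ t ∈ Ico a b
    · rw [indicator_of_mem hξ, indicator_of_mem (show ξ ∈ (fun ξ => F.X ξ t) ⁻¹' Ico a b from hξ)]
    · rw [indicator_of_notMem hξ, indicator_of_notMem
        (show ξ ∉ (fun ξ => F.X ξ t) ⁻¹' Ico a b from hξ), mul_zero]
  rw [e, integrable_indicator_iff measurableSet_Ico, integrable_indicator_iff measurableSet_Ico,
    integral_indicator measurableSet_Ico, integral_indicator measurableSet_Ico] at h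
  refine ⟨h.1.mpr ?_, h.2⟩
  refine Integrable.mono' (g := fun _ => C)
    (integrableOn_const measure_Ico_lt_top.ne) ?_ (ae_restrict_of_ae hC)
  exact ((F.qp_meas1 t).mul (hg.comp (F.X_cont1 t).measurable)).aestronglyMeasurable

lemma qp_mul_ux {ξ t : ℝ} (h : F.q ξ t ≠ 0 → F.Z (F.X ξ t) t = ξ) :
    |F.q ξ t| ^ F.p * F.ux (F.X ξ t) t = F.W ξ t := by
  have hp := F.hp
  by_cases hq : F.q ξ t = 0
  · rw [hq, abs_zero, Real.zero_rpow (by linarith), zero_mul, W, hq]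
    simp [G]
  · rw [ux, h hq, W, ← G_mul_self F.hp]; field_simp

lemma ae_ux (t : ℝ) : ∀ᵐ ξ, |F.q ξ t| ^ F.p * F.ux (F.X ξ t) t = F.W ξ t := by
  filter_upwards [F.ae_Z_X t] with ξ hξ using F.qp_mul_ux hξ

lemma ux_integral (t a b : ℝ) (hab : a ≤ b) :
    IntegrableOn (fun y => F.ux y t) (Ico a b) ∧
      ∫ y in a..b, F.ux y t = F.u b t - F.u a t := by
  have h := F.change_Ico t (F.ux_meas1 t) (C := F.R t ^ (F.p - 1))
    (by filter_upwards [F.ae_ux t] with ξ hξ; rw [hξ]; exact F.W_le ξ t) a b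
  refine ⟨h.1, ?_⟩
  rw [intervalIntegral.integral_of_le hab, ← integral_Ico_eq_integral_Ioc, h.2, u, u, F.U_sub,
    intervalIntegral.integral_of_le (F.Z_mono t hab), ← integral_Ico_eq_integral_Ioc]
  exact integral_congr_ae (ae_restrict_of_ae (F.ae_ux t))

lemma ux_Lp (t a b : ℝ) : IntegrableOn (fun y => |F.ux y t| ^ F.p) (Ico a b) := by
  have hp := F.hp
  refine (F.change_Ico t ((continuous_absPow F.hp).measurable.comp (F.ux_meas1 t)) (C := 1) ?_ a b).1
  filter_upwards [F.ae_Z_X t] with ξ hξ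
  by_cases hq : F.q ξ t = 0
  · rw [hq, abs_zero, Real.zero_rpow (by linarith), zero_mul, abs_zero]; norm_num
  · simp only [Function.comp, ux]
    rw [hξ hq, abs_div, Real.div_rpow (abs_nonneg _) (abs_nonneg _),
      mul_div_cancel₀ _ (Real.rpow_pos_of_pos (abs_pos.mpr hq) _).ne',
      abs_of_nonneg (Real.rpow_nonneg (abs_nonneg _) _)]
    exact Real.rpow_le_one (abs_nonneg _) (F.hc ξ) (by linarith)

lemma u_zero {t : ℝ} (ht : 0 ≤ t) : F.u 0 t = 0 := by
  have h : F.Z 0 t ≤ 0 := by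
    rw [← F.le_X_iff, F.X_neg le_rfl, add_zero]
    exact mul_nonneg F.hf10 ht
  exact F.U_neg h t

/-! ### Joint Hölder continuity -/

/-- The labels of the points of `[0,b]` at times in `[0,T]` form a bounded set. -/
lemma Z_bound (b T : ℝ) (hT : 0 ≤ T) : ∃ r : ℝ, 0 ≤ r ∧ ∀ ξ t, 0 ≤ t → t ≤ T →
    (0 ≤ F.X ξ t → -r ≤ ξ) ∧ (F.X ξ t ≤ b → ξ ≤ r) := by
  obtain ⟨N, hN⟩ := F.X_large T (b + 1) hT
  have hf := mul_nonneg F.hf10 hT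
  refine ⟨N + (F.f1 0 * T + 1), by positivity, fun ξ t h0 ht => ⟨fun h => ?_, fun h => ?_⟩⟩
  · by_contra! hlt
    have hN0 : (0:ℝ) ≤ N := Nat.cast_nonneg N
    rw [F.X_neg (by linarith)] at h
    have := mul_le_mul_of_nonneg_left ht F.hf10
    linarith
  · by_contra! hlt
    have h1 := hN t (by linarith) ht
    have h2 := F.X_mono t (show (N:ℝ) ≤ ξ by linarith)
    simp only at h2
    linarith

lemma q_time {s t : ℝ} (ξ : ℝ) (hs : 0 ≤ s) (ht : 0 ≤ t) :
    |F.q ξ t - F.q ξ s| ≤ F.lam * F.M * |t - s| := by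
  have hcont : Continuous fun s => F.f2 (Uop F.p F.q0 F.c F.a ξ s) := F.hf2c.comp (F.U_cont2 ξ)
  unfold q
  rw [add_sub_add_left_eq_sub, ← mul_sub, abs_mul, F.aeq, F.aeq, max_eq_left hs, max_eq_left ht,
    ← mul_sub, intervalIntegral.integral_interval_sub_left (hcont.intervalIntegrable _ _)
      (hcont.intervalIntegrable _ _), abs_mul, abs_of_pos F.lam_pos]
  have h := intervalIntegral.norm_integral_le_of_norm_le_const (a := s) (b := t) (C := F.M)
    (f := fun s => F.f2 (Uop F.p F.q0 F.c F.a ξ s)) fun x _ => F.hf2b _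
  refine (mul_le_of_le_one_left (mul_nonneg F.lam_pos.le (abs_nonneg _)) (F.hc ξ)).trans ?_
  rw [mul_assoc]
  exact mul_le_mul_of_nonneg_left h F.lam_pos.le

lemma absPow_lip {p : ℝ} (hp : 2 ≤ p) {q r R : ℝ} (hq : |q| ≤ R) (hr : |r| ≤ R) :
    |(|q| ^ p - |r| ^ p)| ≤ p * R ^ (p - 1) * |q - r| := by
  have := (convex_Icc (-R) R).norm_image_sub_le_of_norm_hasDerivWithin_le (f := fun q => |q| ^ p)
    (f' := fun q => p * G p q) (C := p * R ^ (p - 1)) (x := r) (y := q)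
    (fun x _ => (hasDerivAt_absPow hp x).hasDerivWithinAt) ?_ (abs_le.mp hr) (abs_le.mp hq)
  · simpa [Real.norm_eq_abs] using this
  · intro x hx
    rw [Real.norm_eq_abs, abs_mul, abs_of_nonneg (by linarith : 0 ≤ p)]
    exact mul_le_mul_of_nonneg_left (abs_G_le hp (abs_le.mpr hx)) (by linarith)

lemma UX_time (T r : ℝ) (hr : 0 ≤ r) : ∃ B : ℝ, 0 ≤ B ∧ ∀ ξ s t, |ξ| ≤ r →
    0 ≤ s → s ≤ T → 0 ≤ t → t ≤ T →
    |F.U ξ t - F.U ξ s| ≤ B * |t - s| ∧ |F.X ξ t - F.X ξ s| ≤ B * |t - s| := by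
  have hp := F.hp
  have hR := F.R_ge T
  have hlM : 0 ≤ F.lam * F.M := mul_nonneg F.lam_pos.le F.hM
  set B1 := (F.p - 1) * F.R T ^ (F.p - 2) * (F.lam * F.M) with hB1
  set B2 := F.p * F.R T ^ (F.p - 1) * (F.lam * F.M) with hB2
  have hB1n : 0 ≤ B1 := mul_nonneg (mul_nonneg (by linarith) (by positivity)) hlM
  have hB2n : 0 ≤ B2 := mul_nonneg (mul_nonneg (by linarith) (by positivity)) hlM
  have hf10 := F.hf10
  refine ⟨B1 * r + (F.f1 0 + B2 * r), by positivity, fun ξ s t hξ hs hsT ht htT => ⟨?_, ?_⟩⟩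
  · have e : F.U ξ t - F.U ξ s = ∫ η in (0:ℝ)..ξ, (F.W η t - F.W η s) :=
      (intervalIntegral.integral_sub (F.W_ii t 0 ξ) (F.W_ii s 0 ξ)).symm
    rw [e]
    have h := intervalIntegral.norm_integral_le_of_norm_le_const (a := 0) (b := ξ)
      (C := B1 * |t - s|) (f := fun η => F.W η t - F.W η s) fun η _ => by
        unfold W
        rw [← mul_sub, Real.norm_eq_abs, abs_mul]
        refine (mul_le_of_le_one_left (abs_nonneg _) (F.hc η)).trans ?_
        refine (G_lip F.hp ((F.q_le η t).trans (F.R_mono htT))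
          ((F.q_le η s).trans (F.R_mono hsT))).trans ?_
        rw [hB1, mul_assoc _ (F.lam * F.M)]
        exact mul_le_mul_of_nonneg_left (F.q_time η hs ht)
          (mul_nonneg (by linarith) (by positivity))
    refine h.trans ?_
    rw [sub_zero]
    calc B1 * |t - s| * |ξ| ≤ B1 * |t - s| * r := mul_le_mul_of_nonneg_left hξ (by positivity)
      _ = B1 * r * |t - s| := by ring
      _ ≤ _ := mul_le_mul_of_nonneg_right (by
        have : 0 ≤ F.f1 0 + B2 * r := by positivity
        linarith) (abs_nonneg _)
  · have e : F.X ξ t - F.X ξ s = F.f1 0 * (t - s) +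
        ∫ η in (0:ℝ)..ξ, (|F.q η t| ^ F.p - |F.q η s| ^ F.p) := by
      rw [intervalIntegral.integral_sub (F.qp_ii t 0 ξ) (F.qp_ii s 0 ξ)]
      unfold X; ring
    rw [e]
    have h := intervalIntegral.norm_integral_le_of_norm_le_const (a := 0) (b := ξ)
      (C := B2 * |t - s|) (f := fun η => |F.q η t| ^ F.p - |F.q η s| ^ F.p) fun η _ => by
        refine (absPow_lip F.hp ((F.q_le η t).trans (F.R_mono htT))
          ((F.q_le η s).trans (F.R_mono hsT))).trans ?_
        rw [hB2, mul_assoc _ (F.lam * F.M)]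
        exact mul_le_mul_of_nonneg_left (F.q_time η hs ht)
          (mul_nonneg (by linarith) (by positivity))
    rw [sub_zero] at h
    have h2 : B2 * |t - s| * |ξ| ≤ B2 * |t - s| * r := mul_le_mul_of_nonneg_left hξ (by positivity)
    have h3 : |F.f1 0 * (t - s)| = F.f1 0 * |t - s| := by rw [abs_mul, abs_of_nonneg hf10]
    have h4 := abs_add_le (F.f1 0 * (t - s)) (∫ η in (0:ℝ)..ξ, (|F.q η t| ^ F.p - |F.q η s| ^ F.p))
    rw [Real.norm_eq_abs] at h
    have h5 : 0 ≤ B1 * r * |t - s| := by positivity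
    nlinarith

/-- Move along the characteristic through the first point to the second time, where `U` and `X` are
Lipschitz, and then use `U_holder` at fixed time. -/
lemma u_holder (b T : ℝ) (hb : 0 ≤ b) (hT : 0 ≤ T) : ∃ C : ℝ, 0 ≤ C ∧ ∀ y₁ t₁ y₂ t₂,
    0 ≤ y₁ → y₁ ≤ b → 0 ≤ t₁ → t₁ ≤ T → 0 ≤ y₂ → y₂ ≤ b → 0 ≤ t₂ → t₂ ≤ T →
    |F.u y₁ t₁ - F.u y₂ t₂| ≤ C * (|y₁ - y₂| + |t₁ - t₂|) ^ (1 - F.lam) := by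
  obtain ⟨r, hr, hZ⟩ := F.Z_bound b T hT
  obtain ⟨B, hB, htime⟩ := F.UX_time T r hr
  have hl := F.lam_pos
  have hl2 := F.lam_le
  refine ⟨B * (b + T) ^ F.lam + (B + 1) ^ (1 - F.lam) * (2 * r) ^ F.lam, by positivity,
    fun y₁ t₁ y₂ t₂ hy₁ hy₁b ht₁ ht₁T hy₂ hy₂b ht₂ ht₂T => ?_⟩
  set ξ := F.Z y₁ t₁ with hξ
  set η := F.Z y₂ t₂ with hη
  have hXξ : F.X ξ t₁ = y₁ := F.X_Z y₁ t₁
  have hXη : F.X η t₂ = y₂ := F.X_Z y₂ t₂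
  have hξr : |ξ| ≤ r := abs_le.mpr ⟨(hZ ξ t₁ ht₁ ht₁T).1 (by rw [hXξ]; exact hy₁),
    (hZ ξ t₁ ht₁ ht₁T).2 (by rw [hXξ]; exact hy₁b)⟩
  have hηr : |η| ≤ r := abs_le.mpr ⟨(hZ η t₂ ht₂ ht₂T).1 (by rw [hXη]; exact hy₂),
    (hZ η t₂ ht₂ ht₂T).2 (by rw [hXη]; exact hy₂b)⟩
  set D := |y₁ - y₂| + |t₁ - t₂| with hD
  have hD0 : 0 ≤ D := by positivity
  have hDb : D ≤ b + T := add_le_add (abs_le.mpr ⟨by linarith, by linarith⟩)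
    (abs_le.mpr ⟨by linarith, by linarith⟩)
  have ht := htime ξ t₂ t₁ hξr ht₂ ht₂T ht₁ ht₁T
  have htD : |t₁ - t₂| ≤ D := by
    have := abs_nonneg (y₁ - y₂)
    linarith
  have h1 : |F.U ξ t₁ - F.U ξ t₂| ≤ B * (b + T) ^ F.lam * D ^ (1 - F.lam) := by
    have e : D = D ^ F.lam * D ^ (1 - F.lam) := by
      rw [← Real.rpow_add_of_nonneg hD0 hl.le (by linarith)]; simp
    calc _ ≤ B * |t₁ - t₂| := ht.1
      _ ≤ B * (D ^ F.lam * D ^ (1 - F.lam)) := by rw [← e]; gcongr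
      _ ≤ B * ((b + T) ^ F.lam * D ^ (1 - F.lam)) := by gcongr
      _ = _ := by ring
  have h2 : |F.U ξ t₂ - F.U η t₂| ≤
      (B + 1) ^ (1 - F.lam) * (2 * r) ^ F.lam * D ^ (1 - F.lam) := by
    have h3 : |F.X ξ t₂ - F.X η t₂| ≤ (B + 1) * D := by
      rw [hXη]
      have e : F.X ξ t₂ - y₂ = -(F.X ξ t₁ - F.X ξ t₂) + (y₁ - y₂) := by rw [hXξ]; ring
      rw [e]
      refine (abs_add_le _ _).trans ?_
      rw [abs_neg]
      have := ht.2
      have h6 : B * |t₁ - t₂| ≤ B * D := mul_le_mul_of_nonneg_left htD hB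
      have := abs_nonneg (t₁ - t₂)
      linarith
    have h4 : |ξ - η| ≤ 2 * r := (abs_sub _ _).trans (by linarith)
    calc _ ≤ |F.X ξ t₂ - F.X η t₂| ^ (1 - F.lam) * |ξ - η| ^ F.lam := F.U_holder ξ η t₂
      _ ≤ ((B + 1) * D) ^ (1 - F.lam) * (2 * r) ^ F.lam := by
          refine mul_le_mul (Real.rpow_le_rpow (abs_nonneg _) h3 (by linarith))
            (Real.rpow_le_rpow (abs_nonneg _) h4 hl.le) (by positivity) (by positivity)
      _ = _ := by rw [Real.mul_rpow (by positivity) hD0]; ring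
  have e : F.u y₁ t₁ - F.u y₂ t₂ = (F.U ξ t₁ - F.U ξ t₂) + (F.U ξ t₂ - F.U η t₂) := by
    simp only [u, hξ, hη]; ring
  rw [e]
  refine (abs_add_le _ _).trans ?_
  linarith

lemma u_holder_compact {K : Set (ℝ × ℝ)} (hK : IsCompact K) (hK0 : K ⊆ Ici 0 ×ˢ Ici 0) :
    ∃ C : ℝ, ∀ p ∈ K, ∀ q ∈ K,
      |F.u p.1 p.2 - F.u q.1 q.2| ≤ C * (|p.1 - q.1| + |p.2 - q.2|) ^ (1 - F.lam) := by
  obtain ⟨r, hr⟩ := hK.isBounded.exists_norm_le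
  have hb : ∀ p ∈ K, p.1 ≤ max r 0 ∧ p.2 ≤ max r 0 := fun p hp => by
    have h := hr p hp
    have h1 := (le_abs_self p.1).trans ((norm_fst_le p).trans (h.trans (le_max_left r 0)))
    have h2 := (le_abs_self p.2).trans ((norm_snd_le p).trans (h.trans (le_max_left r 0)))
    exact ⟨h1, h2⟩
  obtain ⟨C, -, hC⟩ := F.u_holder (max r 0) (max r 0) (le_max_right _ _) (le_max_right _ _)
  refine ⟨C, fun p hp q hq => ?_⟩
  exact hC p.1 p.2 q.1 q.2 (hK0 hp).1 (hb p hp).1 (hK0 hp).2 (hb p hp).2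
    (hK0 hq).1 (hb q hq).1 (hK0 hq).2 (hb q hq).2

lemma u_contOn : ContinuousOn (fun p : ℝ × ℝ => F.u p.1 p.2) (Ici 0 ×ˢ Ici 0) := by
  intro z hz
  have hz1 : 0 ≤ z.1 := hz.1
  have hz2 : 0 ≤ z.2 := hz.2
  obtain ⟨C, hC0, hC⟩ := F.u_holder (z.1 + 1) (z.2 + 1) (by linarith) (by linarith)
  have hl2 := F.lam_le
  have hlim : Filter.Tendsto (fun w : ℝ × ℝ => C * (|w.1 - z.1| + |w.2 - z.2|) ^ (1 - F.lam))
      (nhdsWithin z (Ici 0 ×ˢ Ici 0)) (nhds 0) := by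
    have hc : Continuous fun w : ℝ × ℝ => C * (|w.1 - z.1| + |w.2 - z.2|) ^ (1 - F.lam) := by
      refine continuous_const.mul (Continuous.rpow_const (by fun_prop) fun _ => Or.inr (by linarith))
    have := hc.tendsto z
    simp only [sub_self, abs_zero, add_zero] at this
    rw [Real.zero_rpow (by linarith), mul_zero] at this
    exact this.mono_left nhdsWithin_le_nhds
  refine tendsto_iff_dist_tendsto_zero.mpr (squeeze_zero' (by filter_upwards with w using dist_nonneg)
    ?_ hlim)
  have hn : ∀ᶠ w in nhdsWithin z (Ici 0 ×ˢ Ici 0), w.1 < z.1 + 1 ∧ w.2 < z.2 + 1 :=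
    nhdsWithin_le_nhds (((continuous_fst.continuousAt).eventually_lt_const (by simp)).and
      ((continuous_snd.continuousAt).eventually_lt_const (by simp)))
  filter_upwards [hn, self_mem_nhdsWithin] with w hw hw0
  rw [Real.dist_eq]
  exact hC w.1 w.2 z.1 z.2 hw0.1 hw.1.le hw0.2 hw.2.le hz1 (by linarith) hz2 (by linarith)

/-! ### The weak formulation -/

/-- For `p = 2` the set where `q` vanishes matters; there `q` crosses zero transversally unless
`c f''(U) = 0`, so that only countably many times are lost along each characteristic. -/
lemma countable_bad (ξ : ℝ) :
    {t | 0 < t ∧ F.q ξ t = 0 ∧ F.c ξ * F.f2 (F.U ξ t) ≠ 0}.Countable := by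
  set S := {t | 0 < t ∧ F.q ξ t = 0 ∧ F.c ξ * F.f2 (F.U ξ t) ≠ 0} with hS
  refine Set.Countable.mono (fun t ht => ?_) (countable_setOfPred_isolated_right_within (s := S))
  refine ⟨ht, ?_⟩
  obtain ⟨h0, hq, hne⟩ := ht
  have hd : F.c ξ * (F.lam * F.f2 (F.U ξ t)) ≠ 0 := by
    have := F.lam_pos.ne'
    intro h
    rcases mul_eq_zero.mp h with h | h
    · exact hne (by rw [h, zero_mul])
    · rcases mul_eq_zero.mp h with h | h
      · exact this h
      · exact hne (by rw [h, mul_zero])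
  have h1 := (F.q_deriv ξ h0).eventually_ne (c := 0) hd
  rw [← Filter.empty_mem_iff_bot]
  have h2 : ∀ᶠ s in nhdsWithin t (S ∩ Ioi t), F.q ξ s ≠ 0 :=
    h1.filter_mono (nhdsWithin_mono t fun s hs => (ne_of_gt hs.2 : s ≠ t))
  filter_upwards [h2, self_mem_nhdsWithin] with s hs hsS
  exact hs hsS.1.2.1

lemma ae_not_bad : ∀ᵐ z : ℝ × ℝ, ¬ (0 < z.2 ∧ F.q z.1 z.2 = 0 ∧ F.c z.1 * F.f2 (F.U z.1 z.2) ≠ 0) := by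
  rw [ae_iff]
  simp only [not_not]
  have h1 : Measurable fun z : ℝ × ℝ => F.c z.1 * F.f2 (F.U z.1 z.2) :=
    (F.hcm.comp measurable_fst).mul (F.hf2c.comp F.U_cont).measurable
  have hm : MeasurableSet
      {z : ℝ × ℝ | 0 < z.2 ∧ F.q z.1 z.2 = 0 ∧ F.c z.1 * F.f2 (F.U z.1 z.2) ≠ 0} :=
    (measurableSet_lt measurable_const measurable_snd).inter
      ((measurableSet_eq_fun F.q_meas measurable_const).inter
        (measurableSet_eq_fun h1 measurable_const).compl)
  rw [Measure.volume_eq_prod, Measure.measure_prod_null hm]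
  filter_upwards with ξ
  exact (F.countable_bad ξ).measure_zero _

section weak
variable {φ : ℝ × ℝ → ℝ} (hφ : ContDiff ℝ 1 φ) (hφc : HasCompactSupport φ)
  (hφs : tsupport φ ⊆ Ioi 0 ×ˢ Ioi 0)

/-- The part of the Lagrangian integrand multiplying `W`. -/
noncomputable def wA (φ : ℝ × ℝ → ℝ) (z : ℝ × ℝ) : ℝ :=
  pt φ (F.Psi z) + F.f1 (F.U z.1 z.2) * px φ (F.Psi z)

/-- The part of the Lagrangian integrand multiplying `c² |q|^{p-2}`. -/
noncomputable def wB (φ : ℝ × ℝ → ℝ) (z : ℝ × ℝ) : ℝ :=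
  (1 - F.lam) * F.f2 (F.U z.1 z.2) * φ (F.Psi z)

/-- The Lagrangian integrand of the weak formulation, up to sign. -/
noncomputable def wH (φ : ℝ × ℝ → ℝ) (z : ℝ × ℝ) : ℝ :=
  F.W z.1 z.2 * F.wA φ z + (F.c z.1 ^ 2 * |F.q z.1 z.2| ^ (F.p - 2)) * F.wB φ z

lemma fderiv_off {φ : ℝ × ℝ → ℝ} {z : ℝ × ℝ} (hz : z ∉ tsupport φ) :
    φ z = 0 ∧ px φ z = 0 ∧ pt φ z = 0 := by
  have h1 : fderiv ℝ φ z = 0 := by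
    by_contra h
    exact hz (support_fderiv_subset ℝ h)
  exact ⟨image_eq_zero_of_notMem_tsupport hz, by simp [px, h1], by simp [pt, h1]⟩

lemma w_off {φ : ℝ × ℝ → ℝ} {z : ℝ × ℝ} (hz : F.Psi z ∉ tsupport φ) :
    F.wA φ z = 0 ∧ F.wB φ z = 0 := by
  obtain ⟨h1, h2, h3⟩ := fderiv_off hz
  simp [wA, wB, h1, h2, h3]

include hφ in
lemma px_cont : Continuous (px φ) ∧ Continuous (pt φ) := by
  have := hφ.continuous_fderiv one_ne_zero
  unfold px pt
  exact ⟨by fun_prop, by fun_prop⟩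

include hφ in
lemma w_cont : Continuous (F.wA φ) ∧ Continuous (F.wB φ) := by
  obtain ⟨h1, h2⟩ := px_cont hφ
  have h3 := F.U_cont
  have h4 := F.Psi_cont
  have h5 : Continuous F.f1 := continuous_iff_continuousAt.mpr fun x => (F.hf1 x).continuousAt
  have h6 := F.hf2c
  have h7 := hφ.continuous
  unfold wA wB
  exact ⟨(h2.comp h4).add ((h5.comp h3).mul (h1.comp h4)),
    (continuous_const.mul (h6.comp h3)).mul (h7.comp h4)⟩

include hφc hφs in
lemma w_supp : ∃ T r : ℝ, 0 ≤ T ∧ ∀ z, F.Psi z ∈ tsupport φ → |z.1| ≤ r ∧ 0 < z.2 ∧ z.2 ≤ T := by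
  obtain ⟨b, hb⟩ := hφc.isCompact.isBounded.exists_norm_le
  obtain ⟨r, hr, hZ⟩ := F.Z_bound b (max b 0) (le_max_right _ _)
  refine ⟨max b 0, r, le_max_right _ _, fun z hz => ?_⟩
  have h1 : 0 < F.X z.1 z.2 := (hφs hz).1
  have h2 : 0 < z.2 := (hφs hz).2
  have h3 : F.X z.1 z.2 ≤ b := (le_abs_self _).trans ((norm_fst_le (F.Psi z)).trans (hb _ hz))
  have h4 : z.2 ≤ b := (le_abs_self _).trans ((norm_snd_le (F.Psi z)).trans (hb _ hz))
  have h5 := hZ z.1 z.2 h2.le (h4.trans (le_max_left _ _))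
  exact ⟨abs_le.mpr ⟨h5.1 h1.le, h5.2 h3⟩, h2, h4.trans (le_max_left _ _)⟩

include hφ hφc hφs in
lemma wH_integrable : Integrable (F.wH φ) := by
  have hp := F.hp
  obtain ⟨T, r, hT, hs⟩ := F.w_supp hφc hφs
  obtain ⟨hA, hB⟩ := F.w_cont hφ
  have hcomp : ∀ z : ℝ × ℝ, z ∉ Icc (-r) r ×ˢ Icc 0 T → F.Psi z ∉ tsupport φ := fun z hz hz' => by
    obtain ⟨h1, h2, h3⟩ := hs z hz'
    exact hz ⟨abs_le.mp h1, h2.le, h3⟩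
  have hAi : Integrable (F.wA φ) := hA.integrable_of_hasCompactSupport
    (HasCompactSupport.intro (isCompact_Icc.prod isCompact_Icc) fun z hz => (F.w_off (hcomp z hz)).1)
  have hBi : Integrable (F.wB φ) := hB.integrable_of_hasCompactSupport
    (HasCompactSupport.intro (isCompact_Icc.prod isCompact_Icc) fun z hz => (F.w_off (hcomp z hz)).2)
  have hm1 : Measurable fun z : ℝ × ℝ => F.c z.1 ^ 2 * |F.q z.1 z.2| ^ (F.p - 2) :=
    ((F.hcm.comp measurable_fst).pow_const 2).mul (F.q_meas.abs.pow_const _)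
  refine Integrable.mono' ((hAi.norm.const_mul (F.R T ^ (F.p - 1))).add
    (hBi.norm.const_mul (F.R T ^ (F.p - 2))))
    ((F.W_meas.mul hA.measurable).add (hm1.mul hB.measurable)).aestronglyMeasurable ?_
  filter_upwards with z
  by_cases hz : F.Psi z ∈ tsupport φ
  · obtain ⟨-, h2, h3⟩ := hs z hz
    have hR := F.R_mono h3
    have hR1 := F.R_ge z.2
    unfold wH
    refine (norm_add_le _ _).trans (add_le_add ?_ ?_)
    · rw [norm_mul]
      refine mul_le_mul_of_nonneg_right ((F.W_le z.1 z.2).trans ?_) (norm_nonneg _)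
      exact Real.rpow_le_rpow (by linarith) hR (by linarith)
    · rw [norm_mul]
      refine mul_le_mul_of_nonneg_right ?_ (norm_nonneg _)
      have hc2 : F.c z.1 ^ 2 ≤ 1 := (sq_le_one_iff_abs_le_one _).mpr (F.hc z.1)
      have hq2 : |F.q z.1 z.2| ^ (F.p - 2) ≤ F.R T ^ (F.p - 2) :=
        Real.rpow_le_rpow (abs_nonneg _) ((F.q_le _ _).trans hR) (by linarith)
      have hq0 : 0 ≤ |F.q z.1 z.2| ^ (F.p - 2) := Real.rpow_nonneg (abs_nonneg _) _
      rw [Real.norm_eq_abs, abs_of_nonneg (mul_nonneg (sq_nonneg _) hq0)]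
      exact (mul_le_of_le_one_left hq0 hc2).trans hq2
  · obtain ⟨h1, h2⟩ := F.w_off hz
    simp [wH, h1, h2]

include hφ hφs in
/-- The Lagrangian integrand is the time derivative of `W φ(X, t)`. -/
lemma wH_deriv (ξ t : ℝ) :
    HasDerivAt (fun t => F.W ξ t * φ (F.Psi (ξ, t))) (F.wH φ (ξ, t)) t := by
  by_cases hz : F.Psi (ξ, t) ∈ tsupport φ
  · have ht : 0 < t := (hφs hz).2
    have h1 := F.W_deriv ξ ht
    have h2 : HasDerivAt (fun t => F.Psi (ξ, t)) (F.f1 (F.U ξ t), 1) t :=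
      (F.X_deriv ξ ht).prodMk (hasDerivAt_id t)
    have h3 := HasFDerivAt.comp_hasDerivAt (f := fun t => F.Psi (ξ, t)) t
      (hφ.differentiable one_ne_zero (F.Psi (ξ, t))).hasFDerivAt h2
    refine (h1.mul h3).congr_deriv ?_
    have e : ((F.f1 (F.U ξ t), 1) : ℝ × ℝ) = F.f1 (F.U ξ t) • ((1, 0) : ℝ × ℝ) + (0, 1) := by simp
    rw [e, map_add, map_smul]
    simp only [wH, wA, wB, px, pt, smul_eq_mul, Function.comp]
    ring
  · obtain ⟨h1, h2⟩ := F.w_off hz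
    have e : F.wH φ (ξ, t) = 0 := by simp [wH, h1, h2]
    rw [e]
    refine (hasDerivAt_const t (0:ℝ)).congr_of_eventuallyEq ?_
    have hc : Continuous fun t => F.Psi (ξ, t) :=
      F.Psi_cont.comp (by fun_prop : Continuous fun t : ℝ => ((ξ, t) : ℝ × ℝ))
    have := hc.continuousAt.eventually_mem ((isClosed_tsupport φ).isOpen_compl.mem_nhds hz)
    filter_upwards [this] with s hs
    rw [image_eq_zero_of_notMem_tsupport hs, mul_zero]

include hφ hφc hφs in
lemma wH_integral : ∫ z, F.wH φ z = 0 := by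
  have hi := F.wH_integrable hφ hφc hφs
  obtain ⟨T, r, hT, hs⟩ := F.w_supp hφc hφs
  rw [Measure.volume_eq_prod] at hi ⊢
  rw [integral_prod _ hi]
  refine integral_eq_zero_of_ae ?_
  filter_upwards [hi.prod_right_ae] with ξ hξ
  refine integral_eq_zero_of_hasDerivAt_of_integrable (F.wH_deriv hφ hφs ξ) hξ ?_
  have hc : Continuous fun t => F.W ξ t * φ (F.Psi (ξ, t)) :=
    continuous_iff_continuousAt.mpr fun t => (F.wH_deriv hφ hφs ξ t).continuousAt
  refine hc.integrable_of_hasCompactSupport (HasCompactSupport.intro (isCompact_Icc (a := 0) (b := T))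
    fun t ht => ?_)
  have hz : F.Psi (ξ, t) ∉ tsupport φ := fun hz => ht (by
    obtain ⟨-, h2, h3⟩ := hs _ hz
    exact ⟨h2.le, h3⟩)
  rw [image_eq_zero_of_notMem_tsupport hz, mul_zero]

include hφ hφc hφs in
theorem weak_form :
    ∫ p in (Ioi (0:ℝ) ×ˢ Ioi (0:ℝ)),
      (-(F.ux p.1 p.2) * (pt φ p + F.f1 (F.u p.1 p.2) * px φ p)
        + (F.lam - 1) * F.f2 (F.u p.1 p.2) * (F.ux p.1 p.2) ^ 2 * φ p) = 0 := by
  have hp := F.hp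
  obtain ⟨h1, h2⟩ := px_cont hφ
  have h5 : Continuous F.f1 := continuous_iff_continuousAt.mpr fun x => (F.hf1 x).continuousAt
  have hm : Measurable fun p : ℝ × ℝ =>
      (-(F.ux p.1 p.2) * (pt φ p + F.f1 (F.u p.1 p.2) * px φ p)
        + (F.lam - 1) * F.f2 (F.u p.1 p.2) * (F.ux p.1 p.2) ^ 2 * φ p) := by
    have a1 := F.ux_meas
    have a2 : Measurable fun p : ℝ × ℝ => F.f1 (F.u p.1 p.2) := h5.measurable.comp F.u_meas
    have a3 : Measurable fun p : ℝ × ℝ => F.f2 (F.u p.1 p.2) := F.hf2c.measurable.comp F.u_meas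
    have a4 := h1.measurable
    have a5 := h2.measurable
    have a6 := hφ.continuous.measurable
    fun_prop
  rw [setIntegral_eq_integral_of_forall_compl_eq_zero, F.change2 hm, ← neg_zero,
    ← F.wH_integral hφ hφc hφs, ← integral_neg]
  · refine integral_congr_ae ?_
    filter_upwards [F.ae_Z_X2, F.ae_not_bad] with z hz hbad
    by_cases hzs : F.Psi z ∈ tsupport φ
    · have ht : 0 < z.2 := (hφs hzs).2
      have e1 := F.qp_mul_ux hz
      have e2 : |F.q z.1 z.2| ^ F.p * F.ux (F.X z.1 z.2) z.2 ^ 2 * F.f2 (F.U z.1 z.2) =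
          F.c z.1 ^ 2 * |F.q z.1 z.2| ^ (F.p - 2) * F.f2 (F.U z.1 z.2) := by
        by_cases hq : F.q z.1 z.2 = 0
        · have hcf : F.c z.1 * F.f2 (F.U z.1 z.2) = 0 := by
            by_contra h
            exact hbad ⟨ht, hq, h⟩
          have e3 : F.c z.1 ^ 2 * |F.q z.1 z.2| ^ (F.p - 2) * F.f2 (F.U z.1 z.2) =
            F.c z.1 * |F.q z.1 z.2| ^ (F.p - 2) * (F.c z.1 * F.f2 (F.U z.1 z.2)) := by ring
          rw [e3, hcf, hq, abs_zero, Real.zero_rpow (by linarith)]; ring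
        · congr 1
          have e4 : |F.q z.1 z.2| ^ F.p = |F.q z.1 z.2| ^ (F.p - 2) * F.q z.1 z.2 ^ 2 := by
            rw [← G_mul_self F.hp, G]; ring
          rw [ux, hz hq, e4]; field_simp
      have e5 : F.u (F.X z.1 z.2) z.2 = F.U z.1 z.2 := F.u_X _ _
      simp only [wH, wA, wB]
      rw [e5, ← e1]
      have e6 : F.Psi z = (F.X z.1 z.2, z.2) := rfl
      rw [e6]
      linear_combination (F.lam - 1) * φ (F.X z.1 z.2, z.2) * e2
    · obtain ⟨g1, g2⟩ := F.w_off hzs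
      obtain ⟨k1, k2, k3⟩ := fderiv_off (z := (F.X z.1 z.2, z.2)) hzs
      simp [wH, g1, g2, k1, k2, k3]
  · intro z hz
    obtain ⟨k1, k2, k3⟩ := fderiv_off (fun h => hz (hφs h))
    simp [k1, k2, k3]

end weak

end Flow
end HS

/-- for `λ ∈ (0,1/3] ∪ {1/2}` there exists a weak solution of (E1)
`u_{tx} + f'(u) u_{xx} + λ f''(u) (u_x)² = 0` on `[0,∞) × [0,∞)` with the given
initial and boundary data which, in addition, is locally Hölder continuous with
exponent `1−λ` jointly in `(x,t)`: on every compact subset `K` of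
`[0,∞) × [0,∞)` one has `|u(x₁,t₁) − u(x₂,t₂)| ≤ C (|x₁−x₂| + |t₁−t₂|)^{1−λ}`. -/
theorem stmt1 (lam : ℝ) (hlam : (0 < lam ∧ lam ≤ 1/3) ∨ lam = 1/2)
    (f : ℝ → ℝ) (hf : ContDiff ℝ 2 f) (hf0 : 0 ≤ deriv f 0)
    (hfLip : ∃ L : ℝ, ∀ a b : ℝ, |deriv (deriv f) a - deriv (deriv f) b| ≤ L * |a - b|)
    (hfbd : ∃ M : ℝ, ∀ a : ℝ, |deriv (deriv f) a| ≤ M)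
    (u₀ g₀ : ℝ → ℝ)
    (hu₀0 : u₀ 0 = 0)
    (hu₀'0 : HasDerivWithinAt u₀ 0 (Ici 0) 0)
    (hg₀int : ∀ b : ℝ, 0 < b → IntervalIntegrable g₀ volume 0 b)
    (hu₀AC : ∀ x : ℝ, 0 ≤ x → u₀ x = ∫ y in (0:ℝ)..x, g₀ y)
    (hu₀W : ∀ b : ℝ, 0 < b → IntegrableOn (fun x => |g₀ x| ^ (1/lam)) (Icc 0 b)) :
    ∃ u ux : ℝ → ℝ → ℝ,
      -- continuity of the solution
      ContinuousOn (fun p : ℝ × ℝ => u p.1 p.2) (Ici 0 ×ˢ Ici 0) ∧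
      -- boundary condition
      (∀ t : ℝ, 0 ≤ t → u 0 t = 0) ∧
      -- initial condition
      (∀ x : ℝ, 0 ≤ x → u x 0 = u₀ x) ∧
      -- for each time, u(·,t) is locally absolutely continuous with derivative
      -- ux(·,t), and lies in W^{1,1/λ}_loc
      (∀ t : ℝ, 0 ≤ t →
        (∀ b : ℝ, 0 < b → IntervalIntegrable (fun y => ux y t) volume 0 b) ∧
        (∀ x : ℝ, 0 ≤ x → u x t = ∫ y in (0:ℝ)..x, ux y t) ∧
        (∀ b : ℝ, 0 < b → IntegrableOn (fun x => |ux x t| ^ (1/lam)) (Icc 0 b))) ∧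
      -- the weak formulation of (E1)
      (∀ φ : ℝ × ℝ → ℝ, ContDiff ℝ 1 φ → HasCompactSupport φ →
        tsupport φ ⊆ Ioi 0 ×ˢ Ioi 0 →
        ∫ p in (Ioi (0:ℝ) ×ˢ Ioi (0:ℝ)),
          (-(ux p.1 p.2) * (pt φ p + deriv f (u p.1 p.2) * px φ p)
            + (lam - 1) * deriv (deriv f) (u p.1 p.2) * (ux p.1 p.2) ^ 2 * φ p) = 0) ∧
      -- joint local Hölder continuity with exponent 1 − λ
      (∀ K : Set (ℝ × ℝ), IsCompact K → K ⊆ Ici 0 ×ˢ Ici 0 →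
        ∃ C : ℝ, ∀ p ∈ K, ∀ q ∈ K,
          |u p.1 p.2 - u q.1 q.2| ≤ C * (|p.1 - q.1| + |p.2 - q.2|) ^ (1 - lam)) := by
  have hl0 : 0 < lam := by rcases hlam with h | h <;> linarith
  have hl2 : lam ≤ 1 / 2 := by rcases hlam with h | h <;> linarith
  have hp : 2 ≤ 1 / lam := by rw [le_div_iff₀ hl0]; linarith
  have hlp : lam = 1 / (1 / lam) := by rw [one_div_one_div]
  obtain ⟨L, hL⟩ := hfLip
  obtain ⟨M, hM⟩ := hfbd
  have hM0 : 0 ≤ M := (abs_nonneg _).trans (hM 0)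
  have hL' : ∀ x y, |deriv (deriv f) x - deriv (deriv f) y| ≤ |L| * |x - y| := fun x y =>
    (hL x y).trans (mul_le_mul_of_nonneg_right (le_abs_self L) (abs_nonneg _))
  have hf1 : ContDiff ℝ 1 (deriv f) := by
    have h : ContDiff ℝ (1 + 1) f := by rw [one_add_one_eq_two]; exact hf
    exact (contDiff_succ_iff_deriv.mp h).2.2
  have hf2 : Continuous (deriv (deriv f)) := hf1.continuous_deriv le_rfl
  obtain ⟨q0, c, hq0m, hcm, hq0, hc, hneg, hins, htend, hdatum⟩ :=
    HS.exists_initial hp hlp hg₀int hu₀AC hu₀W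
  obtain ⟨a, hac, hab, haeq⟩ := HS.exists_lagrangian hp hl0 hM0 (abs_nonneg L) hL' hM hf2 hq0m hcm
    hq0 hc fun ξ hξ => (hneg ξ hξ).2
  let F : HS.Flow :=
    { p := 1 / lam, lam := lam, M := M, L := |L|, f1 := deriv f, f2 := deriv (deriv f)
      q0 := q0, c := c, a := a, hp := hp, hlp := hlp, hM := hM0, hL := abs_nonneg L
      hf1 := fun x => (hf1.differentiable one_ne_zero x).hasDerivAt
      hf10 := hf0, hf2 := hL', hf2b := hM, hf2c := hf2, hq0m := hq0m, hcm := hcm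
      hq0 := hq0, hc := hc, neg := hneg, ins := hins, tend := htend, ac := hac, ab := hab
      aeq := haeq }
  refine ⟨F.u, F.ux, F.u_contOn, fun t ht => F.u_zero ht, fun x hx => ?_, fun t ht => ⟨fun b hb => ?_,
    fun x hx => ?_, fun b hb => ?_⟩, fun φ h1 h2 h3 => F.weak_form h1 h2 h3,
    fun K hK hK0 => F.u_holder_compact hK hK0⟩
  · have ha0 : ∀ ξ, a (ξ, 0) = 0 := fun ξ => by
      have := hab (ξ, 0)
      simpa using this
    have hZ : 0 ≤ F.Z x 0 := by
      by_contra! h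
      have h1 := F.X_neg h.le 0
      rw [F.X_Z, mul_zero, zero_add] at h1
      linarith
    have hX : ∫ η in (0:ℝ)..F.Z x 0, |q0 η| ^ (1 / lam) = x := by
      have h1 := F.X_Z x 0
      simpa [HS.Flow.X, HS.Flow.q, F, ha0] using h1
    have h2 := hdatum _ hZ
    rw [hX] at h2
    rw [← h2]
    simp [HS.Flow.u, HS.Flow.U, HS.Uop, F, ha0]
  · rw [intervalIntegrable_iff_integrableOn_Ico_of_le hb.le]
    exact (F.ux_integral t 0 b hb.le).1
  · rw [(F.ux_integral t 0 x hx).2, F.u_zero ht, sub_zero]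
  · rw [integrableOn_Icc_iff_integrableOn_Ico]
    exact F.ux_Lp t 0 b
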